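/- arXiv:2002.04282 — 2 statements merged into one kernel-verified Lean document; each statement's English description precedes it below -/
import Mathlib

section
/- Let A ⊆ ℝ be ⟨ℝ,+,<,ℤ⟩-definable. Then A is periodic (i.e., admits some nonzero period) if and only if there exist a rational number p > 0 and a set B ⊆ [0,p) which is a finite union of intervals with rational endpoints such that A = pℤ + B = {pk + b : k ∈ ℤ, b ∈ B}. -/
/-!
Why the equivalence holds. The point is that a set `A ⊆ ℝ` definable in `⟨ℝ,+,<,ℤ⟩` is periodic near
`+∞` with an *integral* period `M`, and that its trace on `[0, M)` is a finite union of intervals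
with rational endpoints (`definable_structure`). If moreover `A` has some real period `p ≠ 0`,
possibly irrational, every point can be moved towards `+∞` by multiples of `p`, so that `M` is a
period of all of `A` (`period_of_eventual`), and `A` is `Mℤ + (A ∩ [0, M))`.

The structure of definable sets is obtained by a back-and-forth argument in place of syntactic
quantifier elimination. Two real tuples have the same `M`-type (`Agree`) if their fractional parts
give the same signs to all affine forms with integer coefficients bounded by `M`, and their integer
parts do so too and are congruent modulo `M`. Tuples of the same `3 * M * M!`-type can be extended
by a further coordinate to tuples of the same `M`-type (`agree_extend`): the integer part and the
fractional part of the new coordinate do not interact. For the fractional part, the density of the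
order suffices (`real_ext`); for the integer part, the new integer is placed at the smallest
positive distance above a threshold that has the right residue, unless it equals the threshold
(`int_ext`). By induction on formulas, the truth of a formula depends only on the `M`-type for some
`M` (`formula_agree`). For a single real `x`, the `M`-type is unchanged by `x ↦ x + M` when
`x ≥ M + 1`, and on `[0, M)` it changes only at finitely many rational points.
-/

open FirstOrder

/-- The language of `⟨ℝ,+,<,1⟩`: one constant, one binary function, one binary relation. -/
def SsLang : Language where
  Functions := fun m => match m with
    | 0 => Unit
    | 2 => Unit
    | _ => Empty
  Relations := fun m => match m with
    | 2 => Unit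
    | _ => Empty

noncomputable instance ssStructure : SsLang.Structure ℝ where
  funMap := fun {m} f x =>
    match m, f with
    | 0, _ => (1 : ℝ)
    | 2, _ => x 0 + x 1
  RelMap := fun {m} r x =>
    match m, r with
    | 2, _ => x 0 < x 1

/-- The language of `⟨ℝ,+,<,ℤ⟩`: one binary function, one unary relation, one binary relation. -/
def LsLang : Language where
  Functions := fun m => match m with
    | 2 => Unit
    | _ => Empty
  Relations := fun m => match m with
    | 1 => Unit
    | 2 => Unit
    | _ => Empty

noncomputable instance lsStructure : LsLang.Structure ℝ where
  funMap := fun {m} f x =>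
    match m, f with
    | 2, _ => x 0 + x 1
  RelMap := fun {m} r x =>
    match m, r with
    | 1, _ => ∃ k : ℤ, x 0 = (k : ℝ)
    | 2, _ => x 0 < x 1

/-- `X ⊆ ℝ^n` is definable without parameters in `⟨ℝ,+,<,1⟩`. -/
def SsDefinable {n : ℕ} (X : Set (Fin n → ℝ)) : Prop :=
  Set.Definable (∅ : Set ℝ) SsLang X

/-- `X ⊆ ℝ^n` is definable without parameters in `⟨ℝ,+,<,ℤ⟩`. -/
def LsDefinable {n : ℕ} (X : Set (Fin n → ℝ)) : Prop :=
  Set.Definable (∅ : Set ℝ) LsLang X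

def SsDefinable1 (A : Set ℝ) : Prop := SsDefinable {f : Fin 1 → ℝ | f 0 ∈ A}
def LsDefinable1 (A : Set ℝ) : Prop := LsDefinable {f : Fin 1 → ℝ | f 0 ∈ A}

/-- `v` is an `X`-stratum at `x`: for some `r > 0`,
`B(x,r) ∩ L_v(X ∩ B(x,r)) ⊆ X`.  (The sup norm/metric is the default one on `ι → ℝ`.) -/
def IsStratum {ι : Type} [Fintype ι] (X : Set (ι → ℝ)) (x v : ι → ℝ) : Prop :=
  ∃ r > (0 : ℝ), ∀ y ∈ Metric.ball x r,
    (∃ z ∈ X ∩ Metric.ball x r, ∃ α : ℝ, y = z + α • v) → y ∈ X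

/-- `x` is `X`-singular: `Str_X(x) = {0}`. -/
def IsSingular {ι : Type} [Fintype ι] (X : Set (ι → ℝ)) (x : ι → ℝ) : Prop :=
  ∀ v, IsStratum X x v → v = 0

/-- `x ∼_X y`: some translation of a small ball around `x` identifies `X` near `x` and near `y`. -/
def SimX {n : ℕ} (X : Set (Fin n → ℝ)) (x y : Fin n → ℝ) : Prop :=
  ∃ r > (0 : ℝ), ∀ w : Fin n → ℝ, ‖w‖ < r → (x + w ∈ X ↔ y + w ∈ X)

/-- the dimension of the subspace `Str_X(x)` of strata at `x`. -/
noncomputable def strDim {n : ℕ} (X : Set (Fin n → ℝ)) (x : Fin n → ℝ) : ℕ :=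
  Module.finrank ℝ (Submodule.span ℝ {v | IsStratum X x v})

/-- An interval of `ℝ` all of whose finite endpoints are rational: an order-convex set
whose frontier points (i.e. finite endpoints) are all rational. -/
def IsRatInterval (I : Set ℝ) : Prop :=
  I.OrdConnected ∧ ∀ x ∈ frontier I, ∃ q : ℚ, x = (q : ℝ)

namespace PeriodicLs

/-! ### Linear sign patterns -/

section Signs

variable {R : Type*} [CommRing R] {ι : Type*} [Fintype ι]

/-- The affine form `∑ cᵢ xᵢ + d` with integer coefficients. -/
def lin (c : ι → ℤ) (d : ℤ) (x : ι → R) : R := ∑ i, (c i : R) * x i + (d : R)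

lemma lin_neg (c : ι → ℤ) (d : ℤ) (x : ι → R) : lin (-c) (-d) x = - lin c d x := by
  simp [lin, Finset.sum_neg_distrib]; ring

lemma lin_smul (q : ℤ) (c : ι → ℤ) (d : ℤ) (x : ι → R) :
    lin (fun i => q * c i) (q * d) x = q * lin c d x := by
  simp only [lin, mul_add, Finset.mul_sum]
  push_cast
  simp only [mul_assoc]

lemma lin_sub (c c' : ι → ℤ) (d d' r : ℤ) (x : ι → R) :
    lin (fun i => c i - c' i) (d - d' + r) x = lin c d x - lin c' d' x + r := by
  simp only [lin]
  push_cast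
  simp only [sub_mul, Finset.sum_sub_distrib]
  ring

lemma lin_const (c : ι → ℤ) (d : ℤ) (x : ι → R) : lin c d x = lin c 0 x + d := by simp [lin]

variable [LinearOrder R]

/-- The tuples `x` and `y` give the same sign to every affine form whose integer coefficients are
bounded by `M`. Only negativity is compared: the family of forms is closed under negation, so
positivity and vanishing are compared as well. -/
def SignAgree (M : ℕ) (x y : ι → R) : Prop :=
  ∀ (c : ι → ℤ) (d : ℤ), (∀ i, |c i| ≤ M) → |d| ≤ M → (lin c d x < 0 ↔ lin c d y < 0)

lemma SignAgree.mono {M N : ℕ} (hMN : M ≤ N) {x y : ι → R} (h : SignAgree N x y) :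
    SignAgree M x y := fun c d hc hd =>
  h c d (fun i => (hc i).trans (by exact_mod_cast hMN)) (hd.trans (by exact_mod_cast hMN))

/-- Adjoining a last coordinate to tuples indexed by `α ⊕ Fin n`, the variable contexts of bounded
formulas. -/
lemma signAgree_snoc {α : Type*} [Fintype α] {n M : ℕ} {v w : α → R} {xs ys : Fin n → R} {a b : R}
    (h : ∀ (c : α ⊕ Fin n → ℤ) (d e : ℤ), (∀ i, |c i| ≤ M) → |d| ≤ M → |e| ≤ M →
      (lin c d (Sum.elim v xs) + e * a < 0 ↔ lin c d (Sum.elim w ys) + e * b < 0)) :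
    SignAgree M (Sum.elim v (Fin.snoc (α := fun _ => R) xs a))
      (Sum.elim w (Fin.snoc (α := fun _ => R) ys b)) := by
  intro c d hc hd
  have key : ∀ (v : α → R) (xs : Fin n → R) (a : R),
      lin c d (Sum.elim v (Fin.snoc (α := fun _ => R) xs a)) =
      lin (Sum.elim (fun i => c (.inl i)) (fun i => c (.inr i.castSucc))) d (Sum.elim v xs)
        + (c (.inr (Fin.last n)) : R) * a := by
    intro v xs a
    simp only [lin, Fintype.sum_sum_type, Fin.sum_univ_castSucc, Sum.elim_inl, Sum.elim_inr,
      Fin.snoc_castSucc, Fin.snoc_last]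
    ring
  rw [key, key]
  apply h _ _ _ _ hd (hc _)
  rintro (i | i)
  · exact hc _
  · exact hc _

/-- Differences of thresholds with coefficients bounded by `M * M!` have the same sign at `x` and
`y`, even after a shift by an integer of absolute value at most `M * M!`. -/
lemma SignAgree.diff {M : ℕ} {x y : ι → R}
    (h : SignAgree (3 * (M * M.factorial)) x y) (c c' : ι → ℤ) (d d' r : ℤ)
    (hc : ∀ i, |c i| ≤ (M * M.factorial : ℕ)) (hc' : ∀ i, |c' i| ≤ (M * M.factorial : ℕ))
    (hd : |d| ≤ (M * M.factorial : ℕ)) (hd' : |d'| ≤ (M * M.factorial : ℕ))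
    (hr : |r| ≤ (M * M.factorial : ℕ)) :
    lin c d x - lin c' d' x + r < 0 ↔ lin c d y - lin c' d' y + r < 0 := by
  rw [← lin_sub, ← lin_sub]
  generalize M * M.factorial = N at *
  apply h
  · intro i
    have h1 := hc i
    have h2 := hc' i
    push_cast
    rw [abs_le] at *
    constructor <;> linarith
  · push_cast
    rw [abs_le] at *
    constructor <;> linarith

variable [IsStrictOrderedRing R]

lemma SignAgree.pos {M : ℕ} {x y : ι → R} (h : SignAgree M x y) (c : ι → ℤ) (d : ℤ)
    (hc : ∀ i, |c i| ≤ M) (hd : |d| ≤ M) : 0 < lin c d x ↔ 0 < lin c d y := by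
  have := h (-c) (-d) (by simpa using hc) (by simpa using hd)
  simpa [lin_neg] using this

/-- If `M! * a` lies among the values at `x` of the affine forms bounded by `M * M!` as `M! * b`
lies among their values at `y`, then adjoining `a` to `x` and `b` to `y` preserves agreement of the
affine forms bounded by `M`: a form `t + e * a` with `e ≠ 0` is compared with zero by multiplying
it by the integer `M! / e`. -/
lemma lin_extend {M : ℕ} {x y : ι → R} (h : SignAgree M x y) (a b : R)
    (hab : ∀ (c : ι → ℤ) (d : ℤ), (∀ i, |c i| ≤ (M * M.factorial : ℕ)) →
      |d| ≤ (M * M.factorial : ℕ) →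
      ((M.factorial : R) * a < lin c d x ↔ (M.factorial : R) * b < lin c d y) ∧
      (lin c d x < (M.factorial : R) * a ↔ lin c d y < (M.factorial : R) * b))
    (c : ι → ℤ) (d e : ℤ) (hc : ∀ i, |c i| ≤ M) (hd : |d| ≤ M) (he : |e| ≤ M) :
    lin c d x + e * a < 0 ↔ lin c d y + e * b < 0 := by
  rcases eq_or_ne e 0 with rfl | he0
  · simpa using h c d hc hd
  have hdvd : e ∣ (M.factorial : ℤ) := by
    rw [← Int.natAbs_dvd, Int.natCast_dvd_natCast]
    exact Nat.dvd_factorial (Int.natAbs_pos.2 he0) (by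
      rw [Int.abs_eq_natAbs] at he; exact_mod_cast he)
  obtain ⟨q, hq⟩ := hdvd
  have hF : (0 : ℤ) < M.factorial := by exact_mod_cast M.factorial_pos
  have hq0 : q ≠ 0 := by rintro rfl; simp at hq; omega
  have hqF : |q| ≤ M.factorial := by
    rw [← abs_of_pos hF, hq, abs_mul]
    exact le_mul_of_one_le_left (abs_nonneg _) (Int.one_le_abs he0)
  have key : ∀ z : ℤ, |z| ≤ M → |(-q) * z| ≤ (M * M.factorial : ℕ) := by
    intro z hz
    rw [abs_mul, abs_neg, mul_comm]
    push_cast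
    exact mul_le_mul hz hqF (abs_nonneg _) (by positivity)
  have hT := hab (fun i => (-q) * c i) ((-q) * d) (fun i => key _ (hc i)) (key _ hd)
  rw [lin_smul, lin_smul] at hT
  have hqR : (M.factorial : R) = e * q := by exact_mod_cast congrArg (Int.cast (R := R)) hq
  rw [hqR] at hT
  push_cast at hT
  have e1 : ∀ s t : R, ((e : R) * q * s < -(q : R) * t ↔ (q : R) * (t + e * s) < 0) := by
    intro s t
    constructor <;> intro h <;> linarith
  have e2 : ∀ s t : R, (-(q : R) * t < (e : R) * q * s ↔ 0 < (q : R) * (t + e * s)) := by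
    intro s t
    constructor <;> intro h <;> linarith
  rw [e1, e1, e2, e2] at hT
  rcases lt_or_gt_of_ne hq0 with hq0 | hq0
  · have hq' : (q : R) < 0 := by exact_mod_cast hq0
    simpa [mul_pos_iff, hq', hq'.not_gt] using hT.2
  · have hq' : 0 < (q : R) := by exact_mod_cast hq0
    simpa [mul_neg_iff, hq', hq'.not_gt] using hT.1

end Signs

/-! ### Extension of sign patterns -/

/-- Every position with respect to a finite family of reals is realised with respect to any family
ordered in the same way. -/
lemma real_ext {J : Type*} (s : Finset J) (u v : J → ℝ)
    (h : ∀ i ∈ s, ∀ j ∈ s, (u i < u j ↔ v i < v j)) (a : ℝ) :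
    ∃ b, ∀ j ∈ s, (a < u j ↔ b < v j) ∧ (u j < a ↔ v j < b) := by
  classical
  by_cases hex : ∃ i ∈ s, u i = a
  · obtain ⟨i, hi, rfl⟩ := hex
    exact ⟨v i, fun j hj => ⟨h i hi j hj, h j hj i hi⟩⟩
  push Not at hex
  obtain ⟨b, hb1, hb2⟩ := Order.exists_between_finsets
    ((s.filter (fun j => u j < a)).image v) ((s.filter (fun j => a < u j)).image v) (by
      intro p hp q hq
      simp only [Finset.mem_image, Finset.mem_filter] at hp hq
      obtain ⟨i, ⟨hi, hia⟩, rfl⟩ := hp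
      obtain ⟨j, ⟨hj, hja⟩, rfl⟩ := hq
      exact (h i hi j hj).1 (hia.trans hja))
  refine ⟨b, fun j hj => ?_⟩
  rcases lt_or_gt_of_ne (hex j hj) with hlt | hgt
  · have := hb1 (v j) (Finset.mem_image_of_mem _ (Finset.mem_filter.2 ⟨hj, hlt⟩))
    exact ⟨iff_of_false hlt.not_gt this.not_gt, iff_of_true hlt this⟩
  · have := hb2 (v j) (Finset.mem_image_of_mem _ (Finset.mem_filter.2 ⟨hj, hgt⟩))
    exact ⟨iff_of_true hgt this, iff_of_false hgt.not_gt this.not_gt⟩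

/-- The extension property for integers, when some member of the family is at most `a`: `b` is put
above the counterpart of the largest such member, at the smallest positive distance having the right
residue modulo `K`, or at that counterpart itself if `a` equals the member. -/
lemma int_ext_aux {J : Type*} (s : Finset J) (u v : J → ℤ) (K : ℤ) (hK : 0 < K)
    (h : ∀ i ∈ s, ∀ j ∈ s, ∀ r : ℤ, |r| ≤ K → (u i - u j + r < 0 ↔ v i - v j + r < 0))
    (hc : ∀ i ∈ s, u i ≡ v i [ZMOD K]) (a : ℤ) (hex : ∃ i ∈ s, u i ≤ a) :
    ∃ b, b ≡ a [ZMOD K] ∧ ∀ j ∈ s, (a < u j ↔ b < v j) ∧ (u j < a ↔ v j < b) := by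
  classical
  obtain ⟨i, hi, hmax⟩ := Finset.exists_max_image (s.filter (fun j => u j ≤ a)) u (by
    obtain ⟨i, hi, hia⟩ := hex
    exact ⟨i, Finset.mem_filter.2 ⟨hi, hia⟩⟩)
  obtain ⟨his, hia⟩ := Finset.mem_filter.1 hi
  obtain ⟨r, hr0, hrK, hrle, hrmod, hrz⟩ : ∃ r : ℤ, 0 ≤ r ∧ r ≤ K ∧ r ≤ a - u i ∧
      r ≡ a - u i [ZMOD K] ∧ (r = 0 ↔ a - u i = 0) := by
    by_cases hz : a - u i = 0
    · exact ⟨0, le_rfl, hK.le, by omega, by rw [hz], by omega⟩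
    · have h1 := Int.emod_nonneg (a - u i - 1) hK.ne'
      have h2 := Int.emod_lt_of_pos (a - u i - 1) hK
      have h3 : (a - u i - 1) % K ≤ a - u i - 1 := by
        have h4 := Int.mul_ediv_add_emod (a - u i - 1) K
        have h5 := mul_nonneg hK.le (Int.ediv_nonneg (show 0 ≤ a - u i - 1 by omega) hK.le)
        omega
      refine ⟨(a - u i - 1) % K + 1, by omega, by omega, by omega, ?_, by omega⟩
      have := (Int.mod_modEq (a - u i - 1) K).add_right 1
      simpa using this
  refine ⟨v i + r, ?_, fun j hj => ?_⟩
  · have := ((hc i his).symm.add hrmod)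
    simpa using this
  · have hz := h i his j hj 0 (by simpa using hK.le)
    have hz' := h j hj i his 0 (by simpa using hK.le)
    have hr := h i his j hj r (by rw [abs_of_nonneg hr0]; exact hrK)
    by_cases hja : u j ≤ a
    · have := hmax j (Finset.mem_filter.2 ⟨hj, hja⟩)
      omega
    · omega

/-- Every position and residue with respect to a finite family of integers is realised with respect
to any family with the same residues modulo `K` whose differences have the same values up to `K`. -/
lemma int_ext {J : Type*} (s : Finset J) (hs : s.Nonempty) (u v : J → ℤ) (K : ℤ) (hK : 0 < K)
    (h : ∀ i ∈ s, ∀ j ∈ s, ∀ r : ℤ, |r| ≤ K → (u i - u j + r < 0 ↔ v i - v j + r < 0))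
    (hc : ∀ i ∈ s, u i ≡ v i [ZMOD K]) (a : ℤ) :
    ∃ b, b ≡ a [ZMOD K] ∧ ∀ j ∈ s, (a < u j ↔ b < v j) ∧ (u j < a ↔ v j < b) := by
  by_cases hex : ∃ i ∈ s, u i ≤ a
  · exact int_ext_aux s u v K hK h hc a hex
  · obtain ⟨i, hi⟩ := hs
    push Not at hex
    obtain ⟨b, hb, hb'⟩ := int_ext_aux s (fun j => - u j) (fun j => - v j) K hK
      (fun i hi j hj r hr => by have := h j hj i hi r hr; omega)
      (fun i hi => (hc i hi).neg) (-a) ⟨i, hi, by have := hex i hi; omega⟩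
    refine ⟨-b, by simpa using hb.neg, fun j hj => ?_⟩
    have := hb' j hj
    omega

/-- The index set of the affine forms with coefficients bounded by `N`. -/
noncomputable def forms (ι : Type*) [Fintype ι] (N : ℕ) : Finset ((ι → ℤ) × ℤ) := by
  classical
  exact Fintype.piFinset (fun _ : ι => Finset.Icc (-(N : ℤ)) N) ×ˢ Finset.Icc (-(N : ℤ)) N

lemma mem_forms {ι : Type*} [Fintype ι] {N : ℕ} {p : (ι → ℤ) × ℤ} :
    p ∈ forms ι N ↔ (∀ i, |p.1 i| ≤ N) ∧ |p.2| ≤ N := by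
  classical
  simp [forms, abs_le]

section Extension

variable {ι : Type*} [Fintype ι]

lemma real_extend {M : ℕ} {x y : ι → ℝ} (hM : 0 < M)
    (h : SignAgree (3 * (M * M.factorial)) x y) (a : ℝ) :
    ∃ b : ℝ, ∀ (c : ι → ℤ) (d e : ℤ), (∀ i, |c i| ≤ M) → |d| ≤ M → |e| ≤ M →
      (lin c d x + e * a < 0 ↔ lin c d y + e * b < 0) := by
  have hF := M.factorial_pos
  obtain ⟨β, hβ⟩ := real_ext (forms ι (M * M.factorial)) (fun p => lin p.1 p.2 x)
    (fun p => lin p.1 p.2 y) (by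
      intro p hp q hq
      rw [mem_forms] at hp hq
      simpa [sub_neg] using h.diff p.1 q.1 p.2 q.2 0 hp.1 hq.1 hp.2 hq.2
        (by rw [abs_zero]; positivity))
    ((M.factorial : ℝ) * a)
  have hF' : (M.factorial : ℝ) ≠ 0 := by positivity
  refine ⟨β / M.factorial, lin_extend (h.mono (by nlinarith)) a _ ?_⟩
  intro c d hc hd
  rw [mul_div_cancel₀ _ hF']
  exact hβ (c, d) (mem_forms.2 ⟨hc, hd⟩)

lemma int_extend {M : ℕ} {x y : ι → ℤ} (hM : 0 < M)
    (h : SignAgree (3 * (M * M.factorial)) x y)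
    (hmod : ∀ i, x i ≡ y i [ZMOD (3 * (M * M.factorial) : ℕ)]) (a : ℤ) :
    ∃ b : ℤ, a ≡ b [ZMOD M] ∧
      ∀ (c : ι → ℤ) (d e : ℤ), (∀ i, |c i| ≤ M) → |d| ≤ M → |e| ≤ M →
      (lin c d x + e * a < 0 ↔ lin c d y + e * b < 0) := by
  have hF := M.factorial_pos
  have hF' : (M.factorial : ℤ) ≠ 0 := by positivity
  obtain ⟨β, hβmod, hβ⟩ := int_ext (forms ι (M * M.factorial))
    ⟨(0, 0), mem_forms.2 ⟨fun i => by simp; positivity, by simp; positivity⟩⟩ (fun p => lin p.1 p.2 x)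
    (fun p => lin p.1 p.2 y) (M * M.factorial : ℕ) (by positivity) (by
      intro p hp q hq r hr
      rw [mem_forms] at hp hq
      simpa using h.diff p.1 q.1 p.2 q.2 r hp.1 hq.1 hp.2 hq.2 hr) (by
      intro p _
      have hm : ∀ i, x i ≡ y i [ZMOD (M * M.factorial : ℕ)] := fun i =>
        (hmod i).of_dvd (by push_cast; exact Dvd.intro_left _ rfl)
      simp only [lin, Int.cast_id]
      exact (Int.ModEq.sum fun i _ => (hm i).mul_left _).add_right _)
    ((M.factorial : ℤ) * a)
  -- `β` is congruent to `M! * a` modulo `M * M!`, hence a multiple of `M!`.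
  obtain ⟨b, rfl⟩ : (M.factorial : ℤ) ∣ β := by
    have h1 : β ≡ M.factorial * a [ZMOD M.factorial] :=
      hβmod.of_dvd (by push_cast; exact Dvd.intro_left _ rfl)
    exact (Int.modEq_zero_iff_dvd).1 (h1.trans (Int.modEq_zero_iff_dvd.2 (Dvd.intro _ rfl)))
  refine ⟨b, ?_, ?_⟩
  · rw [Nat.cast_mul, mul_comm (M : ℤ)] at hβmod
    exact (Int.ModEq.mul_left_cancel' hF' hβmod).symm
  · have := lin_extend (h.mono (by nlinarith)) a b
      (fun c d hc hd => hβ (c, d) (mem_forms.2 ⟨hc, hd⟩))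
    exact this

/-- Two real tuples have the same `M`-type: their fractional parts have the same sign pattern, and
their integer parts have the same sign pattern and the same residues modulo `M`. -/
def Agree (M : ℕ) (x y : ι → ℝ) : Prop :=
  SignAgree M (Int.fract ∘ x) (Int.fract ∘ y) ∧
  SignAgree M (Int.floor ∘ x : ι → ℤ) (Int.floor ∘ y) ∧
  ∀ i, ⌊x i⌋ ≡ ⌊y i⌋ [ZMOD M]

lemma Agree.symm {M : ℕ} {x y : ι → ℝ} (h : Agree M x y) : Agree M y x :=
  ⟨fun c d hc hd => (h.1 c d hc hd).symm, fun c d hc hd => (h.2.1 c d hc hd).symm,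
    fun i => (h.2.2 i).symm⟩

lemma Agree.mono {M N : ℕ} (hMN : M ∣ N) (hN : 0 < N) {x y : ι → ℝ} (h : Agree N x y) :
    Agree M x y :=
  ⟨h.1.mono (Nat.le_of_dvd hN hMN), h.2.1.mono (Nat.le_of_dvd hN hMN),
    fun i => (h.2.2 i).of_dvd (by exact_mod_cast hMN)⟩

end Extension

/-- The back-and-forth step: tuples with the same `3 * M * M!`-type can be extended to tuples with
the same `M`-type. The integer and the fractional part of the new coordinate are found
independently. -/
lemma agree_extend {α : Type*} [Fintype α] {n M : ℕ} (hM : 0 < M) {v w : α → ℝ} {xs ys : Fin n → ℝ}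
    (h : Agree (3 * (M * M.factorial)) (Sum.elim v xs) (Sum.elim w ys)) (a : ℝ) :
    ∃ b : ℝ, Agree M (Sum.elim v (Fin.snoc (α := fun _ => ℝ) xs a))
      (Sum.elim w (Fin.snoc (α := fun _ => ℝ) ys b)) := by
  obtain ⟨h1, h2, h3⟩ := h
  obtain ⟨f, hf⟩ := real_extend hM h1 (Int.fract a)
  obtain ⟨k, hkmod, hk⟩ := int_extend hM h2 h3 ⌊a⌋
  have hM1 : (1 : ℤ) ≤ M := by exact_mod_cast hM
  -- The forms `-t` and `t - 1` show that `f` lies in `[0, 1)`, as `Int.fract a` does.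
  have hf0 : 0 ≤ f := by
    have := hf 0 0 1 (by simp) (by simp) (by simpa using hM1)
    simp [lin] at this
    have h0 : ¬ Int.fract a < 0 := (Int.fract_nonneg a).not_gt
    exact not_lt.1 fun hlt => h0 (this.2 hlt)
  have hf1 : f < 1 := by
    have := hf 0 (-1) 1 (by simp) (by simpa using hM1) (by simpa using hM1)
    simp [lin] at this
    exact this.1 (Int.fract_lt_one a)
  have hfl : ⌊(k : ℝ) + f⌋ = k := by
    rw [Int.floor_eq_iff]; constructor <;> linarith
  have hfr : Int.fract ((k : ℝ) + f) = f := by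
    rw [Int.fract, hfl]; ring
  refine ⟨k + f, ?_, ?_, ?_⟩
  · rw [Sum.comp_elim, Sum.comp_elim, Fin.comp_snoc, Fin.comp_snoc, hfr]
    apply signAgree_snoc
    rw [← Sum.comp_elim, ← Sum.comp_elim]
    exact hf
  · rw [Sum.comp_elim, Sum.comp_elim, Fin.comp_snoc, Fin.comp_snoc, hfl]
    apply signAgree_snoc
    rw [← Sum.comp_elim, ← Sum.comp_elim]
    exact hk
  · rintro (i | i)
    · exact (h3 (.inl i)).of_dvd (by
        push_cast
        exact ⟨3 * M.factorial, by ring⟩)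
    · refine Fin.lastCases ?_ (fun i => ?_) i
      · simpa [hfl] using hkmod
      · simpa using (h3 (.inr i)).of_dvd (by
          push_cast
          exact ⟨3 * M.factorial, by ring⟩)

/-! ### Formulas depend only on types -/

lemma term_eq_sum {ι : Type*} [Fintype ι] (t : LsLang.Term ι) :
    ∃ c : ι → ℤ, ∀ x : ι → ℝ, t.realize x = ∑ i, (c i : ℝ) * x i := by
  classical
  induction t with
  | var i =>
    refine ⟨Pi.single i 1, fun x => ?_⟩
    simp [Pi.single_apply]
  | @func l f ts ih =>
    match l, f with
    | 0, f => exact f.elim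
    | 1, f => exact f.elim
    | 2, f =>
      obtain ⟨c, hc⟩ := ih 0
      obtain ⟨c', hc'⟩ := ih 1
      refine ⟨c + c', fun x => ?_⟩
      have : (Language.Term.func f ts).realize x = (ts 0).realize x + (ts 1).realize x := rfl
      rw [this, hc, hc', ← Finset.sum_add_distrib]
      refine Finset.sum_congr rfl fun i _ => ?_
      simp; ring
    | _ + 3, f => exact f.elim

section Atoms

variable {ι : Type*} [Fintype ι]

lemma sum_split (c : ι → ℤ) (x : ι → ℝ) :
    ∑ i, (c i : ℝ) * x i =
      ((lin c 0 (Int.floor ∘ x : ι → ℤ) : ℤ) : ℝ) + lin c 0 (Int.fract ∘ x) := by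
  simp only [lin]
  push_cast
  simp only [add_zero, ← Finset.sum_add_distrib, Function.comp]
  refine Finset.sum_congr rfl fun i _ => ?_
  rw [← mul_add, Int.floor_add_fract]

lemma abs_lin_fract_le (c : ι → ℤ) (x : ι → ℝ) :
    |lin c 0 (Int.fract ∘ x)| ≤ ((∑ i, |c i| : ℤ) : ℝ) := by
  simp only [lin, Int.cast_zero, add_zero, Function.comp]
  refine (Finset.abs_sum_le_sum_abs _ _).trans ?_
  push_cast
  refine Finset.sum_le_sum fun i _ => ?_
  rw [abs_mul, Int.abs_fract]
  exact mul_le_of_le_one_right (abs_nonneg _) (Int.fract_lt_one _).le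

lemma abs_le_of_sum_lt {c : ι → ℤ} {M : ℕ} (hM : ∑ i, |c i| < M) (i : ι) : |c i| ≤ M :=
  (Finset.single_le_sum (f := fun i => |c i|) (fun _ _ => abs_nonneg _) (Finset.mem_univ i)).trans
    hM.le

/-- With `N` and `F` the contributions of the integer and of the fractional parts, `N + F < 0` if
and only if `N ≤ k` and `F < -k` for some integer `k`, and as `F` is bounded by `∑ |cᵢ|`, so may be
`k`. -/
lemma neg_imp {c : ι → ℤ} {M : ℕ} (hM : ∑ i, |c i| < M) {x y : ι → ℝ} (h : Agree M x y)
    (hx : ∑ i, (c i : ℝ) * x i < 0) : ∑ i, (c i : ℝ) * y i < 0 := by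
  rw [sum_split] at hx ⊢
  have hFx := abs_lin_fract_le c x
  set C : ℤ := ∑ i, |c i|
  have hC0 : 0 ≤ C := Finset.sum_nonneg fun _ _ => abs_nonneg _
  set N : ℤ := lin c 0 (Int.floor ∘ x : ι → ℤ) with hN
  set F : ℝ := lin c 0 (Int.fract ∘ x)
  rw [abs_le] at hFx
  obtain ⟨k, hk, hNk, hFk⟩ : ∃ k : ℤ, |k| ≤ M ∧ N ≤ k ∧ F + k < 0 := by
    have hNC : N < C := by
      have : (N : ℝ) < C := by linarith
      exact_mod_cast this
    rcases le_or_gt N (-C - 1) with hlt | hge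
    · refine ⟨-C - 1, by rw [abs_le]; omega, hlt, ?_⟩
      push_cast
      linarith
    · exact ⟨N, by rw [abs_le]; omega, le_rfl, by linarith⟩
  have hc := abs_le_of_sum_lt hM
  have h1 := h.1 c k hc hk
  have h2 := h.2.1.pos c (-k) hc (by simpa using hk)
  rw [lin_const, lin_const c k] at h1
  rw [lin_const, lin_const c (-k)] at h2
  have h1' := h1.1 hFk
  have h2' : (lin c 0 (Int.floor ∘ y : ι → ℤ) : ℤ) ≤ k := by
    by_contra hcon
    have := h2.2 (by simp; omega)
    simp at this
    omega
  have h2'' : ((lin c 0 (Int.floor ∘ y : ι → ℤ) : ℤ) : ℝ) ≤ k := by exact_mod_cast h2'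
  linarith

lemma neg_iff {c : ι → ℤ} {M : ℕ} (hM : ∑ i, |c i| < M) {x y : ι → ℝ} (h : Agree M x y) :
    ∑ i, (c i : ℝ) * x i < 0 ↔ ∑ i, (c i : ℝ) * y i < 0 :=
  ⟨neg_imp hM h, neg_imp hM h.symm⟩

lemma pos_iff {c : ι → ℤ} {M : ℕ} (hM : ∑ i, |c i| < M) {x y : ι → ℝ} (h : Agree M x y) :
    0 < ∑ i, (c i : ℝ) * x i ↔ 0 < ∑ i, (c i : ℝ) * y i := by
  have := neg_iff (c := -c) (by simpa using hM) h
  simpa using this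

lemma eq_zero_iff {c : ι → ℤ} {M : ℕ} (hM : ∑ i, |c i| < M) {x y : ι → ℝ} (h : Agree M x y) :
    ∑ i, (c i : ℝ) * x i = 0 ↔ ∑ i, (c i : ℝ) * y i = 0 := by
  have h1 := neg_iff hM h
  have h2 := pos_iff hM h
  constructor <;> intro h0
  · rw [h0] at h1 h2
    exact le_antisymm (not_lt.1 fun hh => (lt_irrefl _ (h2.2 hh)))
      (not_lt.1 fun hh => (lt_irrefl _ (h1.2 hh)))
  · rw [h0] at h1 h2
    exact le_antisymm (not_lt.1 fun hh => (lt_irrefl _ (h2.1 hh)))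
      (not_lt.1 fun hh => (lt_irrefl _ (h1.1 hh)))

/-- A linear form takes an integer value exactly when the contribution of the fractional parts is
one of the integers in the range allowed by its coefficients. -/
lemma int_imp {c : ι → ℤ} {M : ℕ} (hM : ∑ i, |c i| < M) {x y : ι → ℝ} (h : Agree M x y)
    (hx : ∃ k : ℤ, ∑ i, (c i : ℝ) * x i = k) : ∃ k : ℤ, ∑ i, (c i : ℝ) * y i = k := by
  obtain ⟨k, hk⟩ := hx
  rw [sum_split] at hk
  simp_rw [sum_split]
  have hFx := abs_lin_fract_le c x
  obtain ⟨l, hl⟩ : ∃ l : ℤ, lin c 0 (Int.fract ∘ x) = l :=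
    ⟨k - lin c 0 (Int.floor ∘ x : ι → ℤ), by push_cast; linarith⟩
  have hlM : |(-l)| ≤ M := by
    rw [hl, ← Int.cast_abs] at hFx
    rw [abs_neg]
    exact (by exact_mod_cast hFx : |l| ≤ ∑ i, |c i|).trans hM.le
  have hc := abs_le_of_sum_lt hM
  have h1 := h.1 c (-l) hc hlM
  have h2 := h.1.pos c (-l) hc hlM
  rw [lin_const, lin_const c (-l), hl] at h1 h2
  simp at h1 h2
  refine ⟨lin c 0 (Int.floor ∘ y : ι → ℤ) + l, ?_⟩
  push_cast
  linarith

lemma int_iff {c : ι → ℤ} {M : ℕ} (hM : ∑ i, |c i| < M) {x y : ι → ℝ} (h : Agree M x y) :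
    (∃ k : ℤ, ∑ i, (c i : ℝ) * x i = k) ↔ ∃ k : ℤ, ∑ i, (c i : ℝ) * y i = k :=
  ⟨int_imp hM h, int_imp hM h.symm⟩

lemma exists_gt_sum_abs (c : ι → ℤ) : ∃ M : ℕ, 0 < M ∧ ∑ i, |c i| < M :=
  ⟨(∑ i, |c i|).toNat + 1, by omega, by omega⟩

end Atoms

/-- The truth value of a formula depends only on the `M`-type of the tuple, for some `M`. This is
the semantic content of quantifier elimination for `⟨ℝ,+,<,ℤ⟩`. -/
lemma formula_agree {α : Type*} [Fintype α] {n : ℕ} (φ : LsLang.BoundedFormula α n) :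
    ∃ M : ℕ, 0 < M ∧ ∀ (v w : α → ℝ) (xs ys : Fin n → ℝ),
      Agree M (Sum.elim v xs) (Sum.elim w ys) → (φ.Realize v xs ↔ φ.Realize w ys) := by
  induction φ with
  | falsum => exact ⟨1, one_pos, fun _ _ _ _ _ => Iff.rfl⟩
  | equal t₁ t₂ =>
    obtain ⟨c, hc⟩ := term_eq_sum t₁
    obtain ⟨c', hc'⟩ := term_eq_sum t₂
    obtain ⟨M, hM, hMc⟩ := exists_gt_sum_abs (fun i => c i - c' i)
    refine ⟨M, hM, fun v w xs ys h => ?_⟩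
    have := eq_zero_iff hMc h
    simp only [Int.cast_sub, sub_mul, Finset.sum_sub_distrib, sub_eq_zero] at this
    simpa only [Language.BoundedFormula.Realize, hc, hc'] using this
  | @rel n l R ts =>
    match l, R with
    | 0, R => exact R.elim
    | 1, R =>
      obtain ⟨c, hc⟩ := term_eq_sum (ts 0)
      obtain ⟨M, hM, hMc⟩ := exists_gt_sum_abs c
      refine ⟨M, hM, fun v w xs ys h => ?_⟩
      change (∃ k : ℤ, (ts 0).realize (Sum.elim v xs) = k) ↔
        ∃ k : ℤ, (ts 0).realize (Sum.elim w ys) = k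
      rw [hc, hc]
      exact int_iff hMc h
    | 2, R =>
      obtain ⟨c, hc⟩ := term_eq_sum (ts 0)
      obtain ⟨c', hc'⟩ := term_eq_sum (ts 1)
      obtain ⟨M, hM, hMc⟩ := exists_gt_sum_abs (fun i => c i - c' i)
      refine ⟨M, hM, fun v w xs ys h => ?_⟩
      change (ts 0).realize (Sum.elim v xs) < (ts 1).realize (Sum.elim v xs) ↔
        (ts 0).realize (Sum.elim w ys) < (ts 1).realize (Sum.elim w ys)
      have := neg_iff hMc h
      simp only [Int.cast_sub, sub_mul, Finset.sum_sub_distrib, sub_neg] at this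
      rwa [hc, hc, hc', hc']
    | _ + 3, R => exact R.elim
  | imp φ ψ ih₁ ih₂ =>
    obtain ⟨M, hM, h₁⟩ := ih₁
    obtain ⟨N, hN, h₂⟩ := ih₂
    refine ⟨M * N, by positivity, fun v w xs ys h => ?_⟩
    rw [Language.BoundedFormula.realize_imp, Language.BoundedFormula.realize_imp,
      h₁ v w xs ys (h.mono (Dvd.intro _ rfl) (by positivity)),
      h₂ v w xs ys (h.mono (Dvd.intro_left _ rfl) (by positivity))]
  | all φ ih =>
    obtain ⟨M, hM, hφ⟩ := ih
    have hF := M.factorial_pos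
    refine ⟨3 * (M * M.factorial), by positivity, fun v w xs ys h => ?_⟩
    simp only [Language.BoundedFormula.realize_all]
    constructor
    · intro hall b
      obtain ⟨a, ha⟩ := agree_extend hM h.symm b
      exact (hφ _ _ _ _ ha).2 (hall a)
    · intro hall a
      obtain ⟨b, hb⟩ := agree_extend hM h a
      exact (hφ _ _ _ _ hb).2 (hall b)

/-! ### Definable subsets of the line -/

/-- For subsets of the line, the type of `x` only involves the forms `c t + d` at the fractional and
integer parts of `x`. -/
lemma definable_agree {A : Set ℝ} (hA : LsDefinable1 A) :
    ∃ M : ℕ, 0 < M ∧ ∀ x y : ℝ,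
      (∀ c d : ℤ, |c| ≤ M → |d| ≤ M →
        ((c : ℝ) * Int.fract x + d < 0 ↔ (c : ℝ) * Int.fract y + d < 0)) →
      (∀ c d : ℤ, |c| ≤ M → |d| ≤ M → (c * ⌊x⌋ + d < 0 ↔ c * ⌊y⌋ + d < 0)) →
      ⌊x⌋ ≡ ⌊y⌋ [ZMOD M] → (x ∈ A ↔ y ∈ A) := by
  obtain ⟨φ, hφ⟩ := Set.empty_definable_iff.1 hA
  obtain ⟨M, hM, h⟩ := formula_agree φ
  refine ⟨M, hM, fun x y h1 h2 h3 => ?_⟩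
  have key : ∀ z : ℝ, z ∈ A ↔ φ.Realize (fun _ => z) := fun z => by
    have := Set.ext_iff.1 hφ (fun _ => z)
    simpa using this
  rw [key, key, Language.Formula.Realize, Language.Formula.Realize]
  refine h (fun _ => x) (fun _ => y) _ _ ⟨?_, ?_, ?_⟩
  · intro c d hc hd
    simpa [lin] using h1 (c (.inl 0)) d (hc _) hd
  · intro c d hc hd
    simpa [lin] using h2 (c (.inl 0)) d (hc _) hd
  · rintro (i | i)
    · exact h3
    · exact i.elim0

/-- Beyond `M`, the type of an integer depends only on its residue: the sign of `c n + d` is that of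
`c`, or that of `d` if `c = 0`. -/
lemma int_sign_shift {M : ℕ} {n : ℤ} (hn : (M : ℤ) < n) (c d : ℤ) (hd : |d| ≤ M) :
    c * n + d < 0 ↔ c * (n + M) + d < 0 := by
  rw [abs_le] at hd
  rcases lt_trichotomy c 0 with hc | rfl | hc
  · exact iff_of_true (by nlinarith) (by nlinarith)
  · simp
  · exact iff_of_false (by nlinarith) (by nlinarith)

/-- The points `y` that compare to every element of `T` as `x` does. -/
def cell (T : Finset ℚ) (x : ℝ) : Set ℝ :=
  {y | ∀ t ∈ T, (y < t ↔ x < t) ∧ ((t : ℝ) < y ↔ (t : ℝ) < x)}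

lemma cell_isRatInterval (T : Finset ℚ) (x : ℝ) : IsRatInterval (cell T x) := by
  refine ⟨⟨fun y hy z hz w hw t ht => ?_⟩, fun y hy => ?_⟩
  · have h1 := hy t ht
    have h2 := hz t ht
    exact ⟨⟨fun h => h1.1.1 (hw.1.trans_lt h), fun h => hw.2.trans_lt (h2.1.2 h)⟩,
      ⟨fun h => h2.2.1 (h.trans_le hw.2), fun h => (h1.2.2 h).trans_le hw.1⟩⟩
  · by_contra hq
    push Not at hq
    -- A point `y` outside `T` has a neighbourhood of points that compare to `T` as `y` does.
    have hev : ∀ᶠ z in nhds y, z ∈ cell T y := by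
      simp only [cell, Set.mem_ofPred_eq]
      rw [Filter.eventually_all_finset]
      intro t _
      rcases lt_or_gt_of_ne (hq t) with hlt | hgt
      · filter_upwards [gt_mem_nhds hlt] with z hz
        exact ⟨iff_of_true hz hlt, iff_of_false hz.not_gt hlt.not_gt⟩
      · filter_upwards [lt_mem_nhds hgt] with z hz
        exact ⟨iff_of_false hz.not_gt hgt.not_gt, iff_of_true hz hgt⟩
    have hsame : ∀ z ∈ cell T y, (z ∈ cell T x ↔ y ∈ cell T x) := by
      intro z hz
      refine forall₂_congr fun t ht => ?_
      rw [(hz t ht).1, (hz t ht).2]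
    rw [frontier_eq_closure_inter_closure] at hy
    obtain ⟨z, hz, hzx⟩ := mem_closure_iff_nhds.1 hy.1 _ hev
    obtain ⟨z', hz', hzx'⟩ := mem_closure_iff_nhds.1 hy.2 _ hev
    exact hzx' ((hsame z' hz').2 ((hsame z hz).1 hzx))

lemma finite_range_cell (T : Finset ℚ) : (Set.range (cell T)).Finite := by
  let G : (T → Prop × Prop) → Set ℝ := fun g =>
    {y | ∀ t : T, (y < (t : ℚ) ↔ (g t).1) ∧ (((t : ℚ) : ℝ) < y ↔ (g t).2)}
  refine (Set.finite_range G).subset ?_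
  rintro _ ⟨x, rfl⟩
  refine ⟨fun t => (x < (t : ℚ), ((t : ℚ) : ℝ) < x), ?_⟩
  ext y
  simp [G, cell]

/-- A set that does not separate points comparing in the same way to a finite set of rationals is a
finite union of intervals with rational endpoints. -/
lemma finite_union_cells (T : Finset ℚ) (B : Set ℝ)
    (h : ∀ x y, y ∈ cell T x → x ∈ B → y ∈ B) :
    ∃ 𝒮 : Finset (Set ℝ), (∀ I ∈ 𝒮, IsRatInterval I) ∧ B = ⋃ I ∈ 𝒮, I := by
  have hfin : (cell T '' B).Finite := (finite_range_cell T).subset (Set.image_subset_range _ _)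
  refine ⟨hfin.toFinset, ?_, ?_⟩
  · intro I hI
    obtain ⟨x, _, rfl⟩ := hfin.mem_toFinset.1 hI
    exact cell_isRatInterval T x
  · ext y
    simp only [Set.Finite.mem_toFinset, Set.mem_iUnion, Set.mem_image, exists_prop]
    constructor
    · intro hy
      exact ⟨_, ⟨y, hy, rfl⟩, fun t _ => ⟨Iff.rfl, Iff.rfl⟩⟩
    · rintro ⟨_, ⟨x, hx, rfl⟩, hy⟩
      exact h x y hy hx

/-- The rationals `k + d / c` with `0 ≤ k ≤ M` and `|c|, |d| ≤ M`. They include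
all points of `[0, M]` at which the type can change. The junk value at `c = 0` is the integer `k`. -/
noncomputable def cuts (M : ℕ) : Finset ℚ :=
  ((Finset.Icc (0 : ℤ) M ×ˢ Finset.Icc (-M : ℤ) M) ×ˢ Finset.Icc (-M : ℤ) M).image
    (fun p => (p.1.1 : ℚ) + (p.1.2 : ℚ) / p.2)

lemma mem_cuts {M : ℕ} {k c d : ℤ} (hk0 : 0 ≤ k) (hkM : k ≤ M) (hc : |c| ≤ M) (hd : |d| ≤ M) :
    (k : ℚ) + (d : ℚ) / c ∈ cuts M := by
  rw [abs_le] at hc hd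
  refine Finset.mem_image.2 ⟨((k, d), c), ?_, rfl⟩
  simp [hk0, hkM, hc, hd]

lemma floor_eq_of_cell {M : ℕ} {x y : ℝ} (hx : x ∈ Set.Ico (0 : ℝ) M)
    (hy : y ∈ cell (cuts M) x) : ⌊y⌋ = ⌊x⌋ := by
  have h0 : 0 ≤ ⌊x⌋ := Int.floor_nonneg.2 hx.1
  have h1 : ⌊x⌋ < M := Int.floor_lt.2 (by simpa using hx.2)
  have key : ∀ k : ℤ, 0 ≤ k → k ≤ M → (y < k ↔ x < k) := by
    intro k hk hkM
    have := (hy _ (mem_cuts (c := 0) (d := 0) hk hkM (by simp) (by simp))).1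
    simpa using this
  rw [Int.floor_eq_iff]
  constructor
  · rw [← not_lt, key _ h0 h1.le, not_lt]
    exact Int.floor_le x
  · have := (key (⌊x⌋ + 1) (by omega) (by omega)).2 (by push_cast; exact Int.lt_floor_add_one x)
    simpa using this

lemma fract_sign_of_cell {M : ℕ} {x y : ℝ} (hx : x ∈ Set.Ico (0 : ℝ) M)
    (hy : y ∈ cell (cuts M) x) (c d : ℤ) (hc : |c| ≤ M) (hd : |d| ≤ M) :
    (c : ℝ) * Int.fract x + d < 0 ↔ (c : ℝ) * Int.fract y + d < 0 := by
  have hfl := floor_eq_of_cell hx hy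
  have h0 : 0 ≤ ⌊x⌋ := Int.floor_nonneg.2 hx.1
  have h1 : ⌊x⌋ < M := Int.floor_lt.2 (by simpa using hx.2)
  rcases eq_or_ne c 0 with rfl | hc0
  · simp
  have hcut := hy _ (mem_cuts (c := c) (d := -d) h0 h1.le hc (by simpa using hd))
  push_cast at hcut
  simp only [Int.fract, hfl]
  have hc' : (c : ℝ) ≠ 0 := by exact_mod_cast hc0
  -- `c * (z - ⌊x⌋) + d` is `c` times the distance of `z` to the cut `⌊x⌋ - d / c`.
  have e : ∀ z : ℝ, (c : ℝ) * (z - ⌊x⌋) + d = c * (z - (⌊x⌋ + -(d : ℝ) / c)) := by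
    intro z
    field_simp
    ring
  rw [e, e]
  rcases lt_or_gt_of_ne hc' with hneg | hpos
  · rw [mul_neg_iff, mul_neg_iff]
    simp only [hneg, hneg.not_gt, false_and, false_or, true_and, sub_pos]
    exact hcut.2.symm
  · rw [mul_neg_iff, mul_neg_iff]
    simp only [hpos, hpos.not_gt, false_and, or_false, true_and, sub_neg]
    exact hcut.1.symm

/-- A definable subset of the line is periodic near `+∞` with some integral period `M`, and its
trace on `[0, M)` is a finite union of intervals with rational endpoints. -/
lemma definable_structure {A : Set ℝ} (hA : LsDefinable1 A) :
    ∃ M : ℕ, 0 < M ∧ (∀ x : ℝ, (M : ℝ) + 1 ≤ x → (x ∈ A ↔ x + M ∈ A)) ∧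
      ∃ 𝒮 : Finset (Set ℝ), (∀ I ∈ 𝒮, IsRatInterval I) ∧
        A ∩ Set.Ico (0 : ℝ) M = ⋃ I ∈ 𝒮, I := by
  obtain ⟨M, hM, h⟩ := definable_agree hA
  refine ⟨M, hM, fun x hx => ?_, finite_union_cells (cuts M) _ ?_⟩
  · have hn : (M : ℤ) < ⌊x⌋ := by
      have : ((M : ℤ) + 1 : ℤ) ≤ ⌊x⌋ := Int.le_floor.2 (by push_cast; exact hx)
      omega
    apply h
    · intro c d _ _
      rw [Int.fract_add_natCast]
    · intro c d _ hd
      rw [Int.floor_add_natCast]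
      exact int_sign_shift hn c d hd
    · rw [Int.floor_add_natCast]
      simp [Int.ModEq]
  · rintro x y hy ⟨hxA, hx⟩
    have hfl := floor_eq_of_cell hx hy
    refine ⟨(h x y (fract_sign_of_cell hx hy) (fun c d _ _ => by rw [hfl])
      (by rw [hfl])).1 hxA, ?_⟩
    have h0 : 0 ≤ ⌊x⌋ := Int.floor_nonneg.2 hx.1
    have h1 : ⌊x⌋ < M := Int.floor_lt.2 (by simpa using hx.2)
    rw [← hfl] at h0 h1
    exact ⟨Int.floor_nonneg.1 h0, by simpa using Int.floor_lt.1 h1⟩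

/-- If a periodic set has another period `m` near `+∞`, then `m` is a period everywhere. -/
lemma period_of_eventual {A : Set ℝ} {p m N : ℝ} (hp : p ≠ 0) (hA : ∀ x, x ∈ A ↔ x + p ∈ A)
    (hm : ∀ x, N ≤ x → (x ∈ A ↔ x + m ∈ A)) (x : ℝ) : x ∈ A ↔ x + m ∈ A := by
  have hper : Function.Periodic (fun x => x ∈ A) p := fun x => propext (hA x).symm
  have hper' : Function.Periodic (fun x => x ∈ A) |p| := by
    rcases abs_choice p with h | h <;> rw [h]
    · exact hper
    · exact hper.neg
  obtain ⟨k, hk⟩ := Archimedean.arch (N - x) (abs_pos.2 hp)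
  rw [nsmul_eq_mul] at hk
  have e1 : (x + k * |p| ∈ A) = (x ∈ A) := hper'.nat_mul k x
  have e2 : (x + m + k * |p| ∈ A) = (x + m ∈ A) := hper'.nat_mul k (x + m)
  rw [← e1, ← e2, hm _ (by linarith), add_right_comm]

end PeriodicLs

/-- A `⟨ℝ,+,<,ℤ⟩`-definable set `A ⊆ ℝ` is periodic iff `A = pℤ + B` for some rational
`p > 0` and some `B ⊆ [0,p)` which is a finite union of intervals with rational endpoints. -/
theorem stmt18 (A : Set ℝ) (hA : LsDefinable1 A) :
    (∃ p : ℝ, p ≠ 0 ∧ ∀ x : ℝ, x ∈ A ↔ x + p ∈ A) ↔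
      ∃ p : ℚ, 0 < p ∧ ∃ B : Set ℝ,
        B ⊆ Set.Ico (0 : ℝ) (p : ℝ) ∧
        (∃ 𝒮 : Finset (Set ℝ), (∀ I ∈ 𝒮, IsRatInterval I) ∧ B = ⋃ I ∈ 𝒮, I) ∧
        A = {x : ℝ | ∃ k : ℤ, ∃ b ∈ B, x = (p : ℝ) * (k : ℝ) + b} := by
  constructor
  · rintro ⟨p, hp, hper⟩
    obtain ⟨M, hM, hev, hS⟩ := PeriodicLs.definable_structure hA
    have hperM : Function.Periodic (fun x => x ∈ A) (M : ℝ) := fun x =>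
      propext (PeriodicLs.period_of_eventual hp hper hev x).symm
    have hM' : (0 : ℝ) < M := by exact_mod_cast hM
    refine ⟨M, by exact_mod_cast hM, A ∩ Set.Ico (0 : ℝ) M, ?_, hS, ?_⟩
    · simp
    · ext x
      simp only [Set.mem_ofPred_eq, Rat.cast_natCast]
      constructor
      · intro hx
        have hshift : (x - ⌊x / M⌋ * M ∈ A) = (x ∈ A) := hperM.sub_int_mul_eq ⌊x / M⌋
        refine ⟨⌊x / M⌋, x - ⌊x / M⌋ * M, ⟨hshift.mpr hx, ?_, ?_⟩, by ring⟩
        · have := (le_div_iff₀ hM').1 (Int.floor_le (x / M))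
          linarith
        · have := (div_lt_iff₀ hM').1 (Int.lt_floor_add_one (x / M))
          linarith
      · rintro ⟨k, b, hb, rfl⟩
        have hshift : (b + k * M ∈ A) = (b ∈ A) := hperM.int_mul k b
        rw [add_comm, mul_comm]
        exact hshift.mpr hb.1
  · rintro ⟨p, hp, B, -, -, rfl⟩
    refine ⟨p, by exact_mod_cast hp.ne', fun x => ⟨?_, ?_⟩⟩
    · rintro ⟨k, b, hb, rfl⟩
      exact ⟨k + 1, b, hb, by push_cast; ring⟩
    · rintro ⟨k, b, hb, h⟩
      exact ⟨k - 1, b, hb, by push_cast; linarith⟩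
end

section
/- Let n ≥ 1 and let X ⊆ ℝ^n be ⟨ℝ,+,<,ℤ⟩-definable. Then X is ⟨ℝ,+,<,1⟩-definable if and only if for every rational line ℓ in ℝ^n, the intersection X ∩ ℓ is ⟨ℝ,+,<,1⟩-definable. -/
/-!
The nontrivial direction rests on a description of the definable sets by signs of affine forms.
Quantifier elimination is carried out as a back-and-forth argument: Fourier–Motzkin elimination
(`real_step`) for real variables and Presburger elimination (`int_step`) for integral ones.

* A set definable in `⟨ℝ,+,<,1⟩` is determined by the signs of finitely many rational affine forms
  (`QDet`), and conversely (`SsDefinable.qdet`, `QDet.definable`). In particular it is eventually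
  constant along every rational line, and it has a rational point if it is nonempty.
* A set definable in `⟨ℝ,+,<,ℤ⟩` is determined by signs of integral affine forms `f ∈ F` at the
  integer part `⌊x⌋`, residues of `⌊x⌋` modulo some `M`, and signs of rational affine forms at the
  fractional part (`LDet`, `LsDefinable.ldet`). On a bounded set it is therefore sign-determined
  (`LDet.box`).

Let `X` be of the second kind and eventually constant along rational lines. By pigeonhole on a fast
growing scale (`exists_gap`), the space is covered by finitely many regions, on each of which some
forms of `F` (the small ones) have linear part at most `r` in absolute value while the others (the
large ones) have a linear part of constant sign and of absolute value more than `R`, with `R` much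
larger than `r`. Within a region, translation by a vector of `M ℤⁿ` in the common kernel `V` of the
small linear parts does not affect membership in `X`. Along a ray with rational direction in `V`,
staying in the region, membership is thus periodic; being eventually constant, it is constant
(`ray`). Any two rational points of the region that differ by an element of `V` can be moved to a
common point along such rays, so they are in `X` together (`inv_rat`). The same holds for real
points, as a counterexample would imply a rational one (`inv_real`). Hence within a region `X` is
invariant under `V`, and since the small forms are bounded, each point of the region can be moved
along `V` into a fixed box. There `X` is sign-determined, so its part in the region is the projection
of a sign-determined set (`region_definable`).
-/

open FirstOrder

section Development

open Set

/-! ### Affine forms and the equivalences they define -/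

/-- Affine forms in the variables `ι` over `R`, as pairs of a coefficient vector and a constant
term. -/
abbrev AffForm (R ι : Type) : Type := (ι → R) × R

/-- The value of a rational affine form at a real point. -/
def qev {ι : Type} [Fintype ι] (g : AffForm ℚ ι) (x : ι → ℝ) : ℝ :=
  ∑ i, (g.1 i : ℝ) * x i + (g.2 : ℝ)

/-- The value of an integral affine form at an integral point. -/
def zev {ι : Type} [Fintype ι] (f : AffForm ℤ ι) (k : ι → ℤ) : ℤ :=
  ∑ i, f.1 i * k i + f.2

/-- `x` and `y` give every form of `G` the same sign. -/
def SameQ {ι : Type} [Fintype ι] (G : Set (AffForm ℚ ι)) (x y : ι → ℝ) : Prop :=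
  ∀ g ∈ G, SignType.sign (qev g x) = SignType.sign (qev g y)

/-- Membership in `X` is determined by the signs of finitely many rational affine forms; these are
exactly the finite Boolean combinations of rational half-spaces. Only one implication is
required, since `SameQ` is symmetric. -/
def QDet {ι : Type} [Fintype ι] (X : Set (ι → ℝ)) : Prop :=
  ∃ G : Set (AffForm ℚ ι), G.Finite ∧ ∀ x y, SameQ G x y → x ∈ X → y ∈ X

/-- `k` and `l` give every form of `F` the same sign and are congruent modulo `M` in every
coordinate. -/
def SameZ {ι : Type} [Fintype ι] (F : Set (AffForm ℤ ι)) (M : ℕ) (k l : ι → ℤ) : Prop :=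
  (∀ f ∈ F, SignType.sign (zev f k) = SignType.sign (zev f l)) ∧ ∀ i, k i ≡ l i [ZMOD M]

/-- The integer parts of `x` and `y` agree in the sense of `SameZ F M`, and their fractional parts in
the sense of `SameQ G`. -/
def SameL {ι : Type} [Fintype ι] (F : Set (AffForm ℤ ι)) (G : Set (AffForm ℚ ι)) (M : ℕ)
    (x y : ι → ℝ) : Prop :=
  SameZ F M (fun i => ⌊x i⌋) (fun i => ⌊y i⌋) ∧
    SameQ G (fun i => Int.fract (x i)) (fun i => Int.fract (y i))

/-- Membership in `X` is determined by finitely many signs and residues of the integer part together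
with finitely many signs of forms in the fractional part. The constant terms of the forms in `F`
are integers, so this covers every Presburger condition on the integer part. -/
def LDet {ι : Type} [Fintype ι] (X : Set (ι → ℝ)) : Prop :=
  ∃ (F : Set (AffForm ℤ ι)) (G : Set (AffForm ℚ ι)) (M : ℕ), F.Finite ∧ G.Finite ∧ 0 < M ∧
    ∀ x y, SameL F G M x y → x ∈ X → y ∈ X

lemma sign_iffs {R : Type} [Ring R] [LinearOrder R] [IsStrictOrderedRing R] {a b : R}
    (h : SignType.sign a = SignType.sign b) :
    (0 < a ↔ 0 < b) ∧ (a = 0 ↔ b = 0) ∧ (a < 0 ↔ b < 0) := by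
  refine ⟨?_, ?_, ?_⟩
  · rw [← sign_eq_one_iff, h, sign_eq_one_iff]
  · rw [← sign_eq_zero_iff, h, sign_eq_zero_iff]
  · rw [← sign_eq_neg_one_iff, h, sign_eq_neg_one_iff]

/-! ### Moving one coordinate: the one-dimensional transfer lemmas -/

/-- If the families `p` and `q` of reals are ordered in the same way on the finite set `S`, then for
every `s` some `t` has the same position relative to `q` as `s` has relative to `p`. It can be
taken rational when `q` is rational. -/
lemma real_core {E : Type} (S : Set E) (hS : S.Finite) (p q : E → ℝ)
    (h : ∀ i ∈ S, ∀ j ∈ S, SignType.sign (p i - p j) = SignType.sign (q i - q j)) (s : ℝ) :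
    ∃ t : ℝ, (∀ i ∈ S, SignType.sign (s - p i) = SignType.sign (t - q i)) ∧
      ((∀ i ∈ S, ∃ r : ℚ, q i = r) → ∃ r : ℚ, t = r) := by
  have hlt : ∀ i ∈ S, ∀ j ∈ S, p i < p j → q i < q j := fun i hi j hj hij => by
    have := (sign_iffs (h i hi j hj)).2.2
    have := this.1 (by linarith); linarith
  have hle : ∀ i ∈ S, ∀ j ∈ S, p i ≤ p j → q i ≤ q j := fun i hi j hj hij => by
    have := (sign_iffs (h i hi j hj)).1
    by_contra hc
    have := this.2 (by linarith); linarith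
  by_cases h0 : ∃ i ∈ S, p i = s
  · obtain ⟨i, hi, rfl⟩ := h0
    exact ⟨q i, fun j hj => h i hi j hj, fun hr => hr i hi⟩
  push Not at h0
  have key : ∀ t : ℝ, (∀ i ∈ S, p i < s → q i < t) → (∀ i ∈ S, s < p i → t < q i) →
      ∀ i ∈ S, SignType.sign (s - p i) = SignType.sign (t - q i) := by
    intro t hl hu i hi
    rcases lt_or_gt_of_ne (h0 i hi) with hlt | hgt
    · rw [sign_pos (by linarith), sign_pos (by linarith [hl i hi hlt])]
    · rw [sign_neg (by linarith), sign_neg (by linarith [hu i hi hgt])]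
  have hL : ({i | i ∈ S ∧ p i < s}).Finite := hS.subset fun i hi => hi.1
  have hU : ({i | i ∈ S ∧ s < p i}).Finite := hS.subset fun i hi => hi.1
  rcases eq_empty_or_nonempty {i | i ∈ S ∧ p i < s} with hLe | hLn
  · rcases eq_empty_or_nonempty {i | i ∈ S ∧ s < p i} with hUe | hUn
    · refine ⟨0, key 0 (fun i hi hp => ?_) (fun i hi hp => ?_), fun _ => ⟨0, by simp⟩⟩
      · exact absurd (show i ∈ {i | i ∈ S ∧ p i < s} from ⟨hi, hp⟩) (by simp [hLe])
      · exact absurd (show i ∈ {i | i ∈ S ∧ s < p i} from ⟨hi, hp⟩) (by simp [hUe])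
    · obtain ⟨u, ⟨huS, hus⟩, hu⟩ := exists_min_image _ p hU hUn
      refine ⟨q u - 1, key _ (fun i hi hp => ?_) (fun i hi hp => ?_), fun hr => ?_⟩
      · exact absurd (show i ∈ {i | i ∈ S ∧ p i < s} from ⟨hi, hp⟩) (by simp [hLe])
      · linarith [hle u huS i hi (hu i ⟨hi, hp⟩)]
      · obtain ⟨r, hr⟩ := hr u huS
        exact ⟨r - 1, by push_cast; rw [hr]⟩
  · obtain ⟨l, ⟨hlS, hls⟩, hl⟩ := exists_max_image _ p hL hLn
    rcases eq_empty_or_nonempty {i | i ∈ S ∧ s < p i} with hUe | hUn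
    · refine ⟨q l + 1, key _ (fun i hi hp => ?_) (fun i hi hp => ?_), fun hr => ?_⟩
      · linarith [hle i hi l hlS (hl i ⟨hi, hp⟩)]
      · exact absurd (show i ∈ {i | i ∈ S ∧ s < p i} from ⟨hi, hp⟩) (by simp [hUe])
      · obtain ⟨r, hr⟩ := hr l hlS
        exact ⟨r + 1, by push_cast; rw [hr]⟩
    · obtain ⟨u, ⟨huS, hus⟩, hu⟩ := exists_min_image _ p hU hUn
      have hlu := hlt l hlS u huS (hls.trans hus)
      refine ⟨(q l + q u) / 2, key _ (fun i hi hp => ?_) (fun i hi hp => ?_), fun hr => ?_⟩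
      · linarith [hle i hi l hlS (hl i ⟨hi, hp⟩)]
      · linarith [hle u huS i hi (hu i ⟨hi, hp⟩)]
      · obtain ⟨r, hr1⟩ := hr l hlS
        obtain ⟨r', hr2⟩ := hr u huS
        exact ⟨(r + r') / 2, by push_cast; rw [hr1, hr2]⟩

/-- Division by `N` with remainder in `[1, N]`. -/
lemma exists_small_rem (N : ℤ) (hN : 0 < N) (q : ℤ) (hq : 0 < q) :
    ∃ r, 1 ≤ r ∧ r ≤ N ∧ r ≤ q ∧ ∃ m, q - r = N * m := by
  refine ⟨(q - 1) % N + 1, ?_, ?_, ?_, (q - 1) / N, ?_⟩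
  · linarith [Int.emod_nonneg (q - 1) hN.ne']
  · linarith [Int.emod_lt_of_pos (q - 1) hN]
  · have := Int.emod_add_mul_ediv (q - 1) N
    have h2 : 0 ≤ (q - 1) / N := Int.ediv_nonneg (by linarith) hN.le
    nlinarith
  · linarith [Int.emod_add_mul_ediv (q - 1) N]

/-- The integral analogue of `real_core`: if the differences of the `p i` and of the `q i` agree when
compared with each integer of `[0, D * M]`, and `p i ≡ q i` modulo `D * M`, then every `s` has a
counterpart `t ≡ s` modulo `M` such that `D * t` lies among the `q i` as `D * s` lies among the
`p i`. The extra comparisons leave room for the congruence: a gap between consecutive `p i` of size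
at most `D * M` is reproduced exactly, and a longer gap contains every residue class. -/
lemma int_core {E : Type} (S : Set E) (hS : S.Finite) (D M : ℤ) (hD : 0 < D) (hM : 0 < M)
    (p q : E → ℤ)
    (h : ∀ i ∈ S, ∀ j ∈ S, ∀ r, 0 ≤ r → r ≤ D * M →
      SignType.sign (p i - p j - r) = SignType.sign (q i - q j - r))
    (hmod : ∀ i ∈ S, ∃ m, q i - p i = D * M * m) (s : ℤ) :
    ∃ t : ℤ, (∃ m, t - s = M * m) ∧
      ∀ i ∈ S, SignType.sign (D * s - p i) = SignType.sign (D * t - q i) := by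
  have hDM : 0 < D * M := mul_pos hD hM
  have hle : ∀ i ∈ S, ∀ j ∈ S, p i ≤ p j → q i ≤ q j := fun i hi j hj hij => by
    have := (sign_iffs (h i hi j hj 0 le_rfl hDM.le)).1
    by_contra hc
    have := this.2 (by linarith); linarith
  -- an admissible `t` is obtained from any `T ≡ D * s` modulo `D * M` in the right position
  have key : ∀ T m : ℤ, T - D * s = D * M * m →
      (∀ i ∈ S, SignType.sign (D * s - p i) = SignType.sign (T - q i)) →
      ∃ t : ℤ, (∃ m, t - s = M * m) ∧
      ∀ i ∈ S, SignType.sign (D * s - p i) = SignType.sign (D * t - q i) := by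
    intro T m hT hs
    refine ⟨s + M * m, ⟨m, by ring⟩, fun i hi => ?_⟩
    rw [hs i hi]; congr 2; linear_combination hT
  rcases eq_empty_or_nonempty {i | i ∈ S ∧ p i ≤ D * s} with hLe | hLn
  · have hU : ∀ i ∈ S, D * s < p i := fun i hi => by
      by_contra hc
      exact absurd (show i ∈ {i | i ∈ S ∧ p i ≤ D * s} from ⟨hi, not_lt.1 hc⟩) (by simp [hLe])
    rcases eq_empty_or_nonempty S with rfl | hSn
    · exact ⟨s, ⟨0, by ring⟩, by simp⟩
    obtain ⟨u, huS, hu⟩ := exists_min_image _ p hS hSn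
    obtain ⟨r, hr1, hr2, hr3, m, hm⟩ := exists_small_rem (D * M) hDM (p u - D * s)
      (by linarith [hU u huS])
    obtain ⟨m', hm'⟩ := hmod u huS
    refine key (q u - r) (m + m') (by linear_combination hm + hm') fun i hi => ?_
    rw [sign_neg (by linarith [hU i hi]), sign_neg (by linarith [hle u huS i hi (hu i hi)])]
  · obtain ⟨l, ⟨hlS, hls⟩, hl⟩ := exists_max_image _ p
      (hS.subset fun i hi => hi.1 : ({i | i ∈ S ∧ p i ≤ D * s}).Finite) hLn
    obtain ⟨m', hm'⟩ := hmod l hlS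
    rcases hls.eq_or_lt with heq | hlt
    · refine key (q l) m' (by linear_combination hm' + heq) fun i hi => ?_
      simpa [heq] using h l hlS i hi 0 le_rfl hDM.le
    obtain ⟨r, hr1, hr2, hr3, m, hm⟩ := exists_small_rem (D * M) hDM (D * s - p l)
      (by linarith)
    refine key (q l + r) (m' - m) (by linear_combination hm' - hm) fun i hi => ?_
    rcases le_or_gt (p i) (D * s) with hi' | hi'
    · have h1 := hl i ⟨hi, hi'⟩
      have h2 := hle i hi l hlS h1
      rw [sign_pos (by linarith), sign_pos (by linarith)]
    · have := (sign_iffs (h i hi l hlS r (by linarith) hr2)).1.1 (by linarith)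
      rw [sign_neg (by linarith), sign_neg (by linarith)]

/-! ### Eliminating one variable -/

/-- Appends the value `s` as a new last coordinate. -/
def extS {α : Type} {n : ℕ} {K : Type} (z : α ⊕ Fin n → K) (s : K) : α ⊕ Fin (n + 1) → K :=
  Sum.elim (fun a => z (Sum.inl a)) (Fin.snoc (α := fun _ => K) (fun i => z (Sum.inr i)) s)

/-- The form obtained by setting the last variable to `0`. -/
def resF {α R : Type} {n : ℕ} (g : AffForm R (α ⊕ Fin (n + 1))) : AffForm R (α ⊕ Fin n) :=
  (fun i => g.1 (Sum.map id Fin.castSucc i), g.2)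

/-- The coefficient of the last variable. -/
def lastC {α R : Type} {n : ℕ} (g : AffForm R (α ⊕ Fin (n + 1))) : R := g.1 (Sum.inr (Fin.last n))

lemma qev_extS {α : Type} [Fintype α] {n : ℕ} (g : AffForm ℚ (α ⊕ Fin (n + 1)))
    (z : α ⊕ Fin n → ℝ) (s : ℝ) : qev g (extS z s) = qev (resF g) z + lastC g * s := by
  simp [qev, extS, resF, lastC, Fintype.sum_sum_type, Fin.sum_univ_castSucc]
  ring

lemma zev_extS {α : Type} [Fintype α] {n : ℕ} (g : AffForm ℤ (α ⊕ Fin (n + 1)))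
    (z : α ⊕ Fin n → ℤ) (s : ℤ) : zev g (extS z s) = zev (resF g) z + lastC g * s := by
  simp [zev, extS, resF, lastC, Fintype.sum_sum_type, Fin.sum_univ_castSucc]
  ring

lemma comp_extS {α : Type} {n : ℕ} {K K' : Type} (φ : K → K') (z : α ⊕ Fin n → K) (s : K) :
    (fun i => φ (extS z s i)) = extS (fun i => φ (z i)) (φ s) := by
  funext i
  rcases i with a | i
  · rfl
  · refine Fin.lastCases ?_ (fun i => ?_) i <;> simp [extS]

lemma qev_smul {ι : Type} [Fintype ι] (c : ℚ) (g : AffForm ℚ ι) (x : ι → ℝ) :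
    qev (c • g) x = c * qev g x := by
  simp [qev, mul_add, Finset.mul_sum, mul_assoc]

lemma qev_sub {ι : Type} [Fintype ι] (g h : AffForm ℚ ι) (x : ι → ℝ) :
    qev (g - h) x = qev g x - qev h x := by
  simp [qev, sub_mul, Finset.sum_sub_distrib]; ring

lemma zev_smul {ι : Type} [Fintype ι] (c : ℤ) (g : AffForm ℤ ι) (x : ι → ℤ) :
    zev (c • g) x = c * zev g x := by
  simp [zev, mul_add, Finset.mul_sum, mul_assoc]

lemma zev_sub {ι : Type} [Fintype ι] (g h : AffForm ℤ ι) (x : ι → ℤ) :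
    zev (g - h) x = zev g x - zev h x := by
  simp [zev, sub_mul, Finset.sum_sub_distrib]; ring

lemma zev_const {ι : Type} [Fintype ι] (r : ℤ) (x : ι → ℤ) :
    zev ((0, r) : AffForm ℤ ι) x = r := by
  simp [zev]

lemma qev_rat {ι : Type} [Fintype ι] (g : AffForm ℚ ι) (x : ι → ℝ) (h : ∀ i, ∃ r : ℚ, x i = r) :
    ∃ r : ℚ, qev g x = r := by
  choose r hr using h
  exact ⟨∑ i, g.1 i * r i + g.2, by simp [qev, hr]⟩

/-- One step of Fourier–Motzkin elimination, as a back-and-forth property: the signs of finitely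
many forms `G'` at `z` determine which sign patterns of `G` occur on the fibre over `z`. The
forms in `G'` compare the roots, in the last variable, of the forms in `G`. -/
lemma real_step {α : Type} [Fintype α] {n : ℕ} (G : Set (AffForm ℚ (α ⊕ Fin (n + 1))))
    (hG : G.Finite) : ∃ G' : Set (AffForm ℚ (α ⊕ Fin n)), G'.Finite ∧
      ∀ z w, SameQ G' z w → ∀ s, ∃ t, SameQ G (extS z s) (extS w t) ∧
        ((∀ i, ∃ r : ℚ, w i = r) → ∃ r : ℚ, t = r) := by
  let e : AffForm ℚ (α ⊕ Fin (n + 1)) → AffForm ℚ (α ⊕ Fin n) :=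
    fun g => (-(lastC g)⁻¹) • resF g
  refine ⟨resF '' G ∪ image2 (fun g h => e g - e h) G G,
    (hG.image _).union (hG.image2 _ hG), fun z w hzw s => ?_⟩
  obtain ⟨t, ht, htr⟩ := real_core G hG (fun g => qev (e g) z) (fun g => qev (e g) w)
    (fun i hi j hj => by
      have := hzw (e i - e j) (Or.inr (mem_image2_of_mem hi hj))
      simpa only [qev_sub] using this) s
  refine ⟨t, fun g hg => ?_, fun hr => htr fun i _ => qev_rat _ _ hr⟩
  rw [qev_extS, qev_extS]
  by_cases hc : lastC g = 0
  · simpa [hc] using hzw _ (Or.inl (mem_image_of_mem _ hg))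
  · have hc' : ((lastC g : ℚ) : ℝ) ≠ 0 := by exact_mod_cast hc
    have h1 : ∀ x (s : ℝ), qev (resF g) x + (lastC g : ℚ) * s = (lastC g : ℚ) * (s - qev (e g) x) := by
      intro x s
      simp only [e, qev_smul]; push_cast; field_simp; ring
    rw [h1, h1, sign_mul, sign_mul, ht g hg]

/-- One step of Presburger's quantifier elimination, as a back-and-forth property. The forms with
nonzero last coefficient are first scaled to have the common last coefficient `D`. -/
lemma int_step {α : Type} [Fintype α] {n : ℕ} (F : Set (AffForm ℤ (α ⊕ Fin (n + 1))))
    (hF : F.Finite) (M : ℕ) (hM : 0 < M) :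
    ∃ (F' : Set (AffForm ℤ (α ⊕ Fin n))) (M' : ℕ), F'.Finite ∧ 0 < M' ∧
      ∀ z w, SameZ F' M' z w → ∀ s, ∃ t, SameZ F M (extS z s) (extS w t) := by
  let F1 : Set (AffForm ℤ (α ⊕ Fin (n + 1))) := {g ∈ F | lastC g ≠ 0}
  have hF1 : F1.Finite := hF.subset fun g hg => hg.1
  obtain ⟨D, hD, hDdvd⟩ : ∃ D : ℕ, 0 < D ∧ ∀ g ∈ F1, lastC g ∣ (D : ℤ) := by
    refine ⟨∏ g ∈ hF1.toFinset, (lastC g).natAbs, ?_, fun g hg => ?_⟩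
    · exact Finset.prod_pos fun g hg => Int.natAbs_pos.2 ((hF1.mem_toFinset.1 hg).2)
    · exact Int.natAbs_dvd.1 (Int.natCast_dvd_natCast.2
        (Finset.dvd_prod_of_mem _ (hF1.mem_toFinset.2 hg)))
  let e : AffForm ℤ (α ⊕ Fin (n + 1)) → AffForm ℤ (α ⊕ Fin n) :=
    fun g => (-((D : ℤ) / lastC g)) • resF g
  refine ⟨resF '' F ∪ image2 (fun a r => a - ((0, r) : AffForm ℤ (α ⊕ Fin n)))
      (image2 (fun g h => e g - e h) F1 F1) (Icc 0 ((D : ℤ) * M)), D * M,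
    (hF.image _).union ((hF1.image2 _ hF1).image2 _ (finite_Icc _ _)), Nat.mul_pos hD hM,
    fun z w hzw s => ?_⟩
  obtain ⟨hs, hmod⟩ := hzw
  obtain ⟨t, ⟨m, hm⟩, ht⟩ := int_core F1 hF1 D M (by exact_mod_cast hD) (by exact_mod_cast hM)
    (fun g => zev (e g) z) (fun g => zev (e g) w)
    (fun i hi j hj r hr0 hr1 => by
      have := hs (e i - e j - (0, r)) (Or.inr (mem_image2_of_mem (mem_image2_of_mem hi hj)
        ⟨hr0, hr1⟩))
      simpa only [zev_sub, zev_const] using this)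
    (fun g _ => by
      have h1 : ∀ i, ((D : ℤ) * M) ∣ w i - z i := fun i => by
        have := (hmod i).dvd; push_cast at this; exact this
      have h2 : zev (e g) w - zev (e g) z = ∑ i, (e g).1 i * (w i - z i) := by
        simp [zev, mul_sub, Finset.sum_sub_distrib]
      have h3 : ((D : ℤ) * M) ∣ zev (e g) w - zev (e g) z := by
        rw [h2]; exact Finset.dvd_sum fun i _ => (h1 i).mul_left _
      exact h3) s
  refine ⟨t, fun g hg => ?_, fun i => ?_⟩
  · rw [zev_extS, zev_extS]
    by_cases hc : lastC g = 0
    · simpa [hc] using hs _ (Or.inl (mem_image_of_mem _ hg))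
    · have hg1 : g ∈ F1 := ⟨hg, hc⟩
      obtain ⟨d, hd⟩ := hDdvd g hg1
      have hdd : (D : ℤ) / lastC g = d := by rw [hd]; exact Int.mul_ediv_cancel_left _ hc
      have hd0 : d ≠ 0 := by
        rintro rfl
        simp at hd; omega
      have h1 : ∀ x (s : ℤ), (D : ℤ) * s - zev (e g) x = d * (zev (resF g) x + lastC g * s) := by
        intro x s
        simp only [e, zev_smul, hdd]; rw [hd]; ring
      have h2 := ht g hg1
      rw [h1, h1, sign_mul, sign_mul] at h2
      have h3 : SignType.sign d ≠ 0 := by simpa [sign_eq_zero_iff] using hd0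
      revert h2 h3
      generalize SignType.sign d = a
      generalize SignType.sign (zev (resF g) z + lastC g * s) = b
      generalize SignType.sign (zev (resF g) w + lastC g * t) = c
      revert a b c; decide
  · rcases i with a | i
    · refine (hmod (Sum.inl a)).of_dvd ?_
      push_cast; exact Dvd.intro_left _ rfl
    · refine Fin.lastCases ?_ (fun i => ?_) i
      · simp only [extS, Sum.elim_inr, Fin.snoc_last]
        exact Int.modEq_iff_dvd.2 ⟨m, hm⟩
      · simp only [extS, Sum.elim_inr, Fin.snoc_castSucc]
        refine (hmod (Sum.inr i)).of_dvd ?_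
        push_cast; exact Dvd.intro_left _ rfl

/-! ### Rational points with prescribed signs -/

lemma qev_single {ι : Type} [Fintype ι] [DecidableEq ι] (i : ι) (c : ℚ) (x : ι → ℝ) :
    qev ((Pi.single i 1, c) : AffForm ℚ ι) x = x i + c := by
  have : ∀ j, ((Pi.single i (1 : ℚ) : ι → ℚ) j : ℝ) = if j = i then 1 else 0 := fun j => by
    by_cases h : j = i <;> simp [h]
  simp only [qev, this]
  simp

lemma qev_comp {ι κ : Type} [Fintype ι] [Fintype κ] (e : κ ≃ ι) (g : AffForm ℚ ι) (x : ι → ℝ) :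
    qev ((fun i => g.1 (e i), g.2) : AffForm ℚ κ) (fun i => x (e i)) = qev g x := by
  simp only [qev]
  rw [e.sum_comp (fun i => (g.1 i : ℝ) * x i)]

lemma rat_approx_aux (n : ℕ) (G : Set (AffForm ℚ (Empty ⊕ Fin n))) (hG : G.Finite)
    (x : Empty ⊕ Fin n → ℝ) : ∃ y, SameQ G x y ∧ ∀ i, ∃ r : ℚ, y i = r := by
  induction n with
  | zero =>
    refine ⟨x, fun _ _ => rfl, fun i => ?_⟩
    rcases i with i | i
    · exact i.elim
    · exact i.elim0
  | succ n ih =>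
    obtain ⟨G', hG', h⟩ := real_step G hG
    let z : Empty ⊕ Fin n → ℝ := fun i => x (Sum.map id Fin.castSucc i)
    have hx : x = extS z (x (Sum.inr (Fin.last n))) := by
      funext i
      rcases i with i | i
      · exact i.elim
      · refine Fin.lastCases ?_ (fun i => ?_) i <;> simp [extS, z]
    obtain ⟨w, hw, hwr⟩ := ih G' hG' z
    obtain ⟨t, ht, htr⟩ := h z w hw (x (Sum.inr (Fin.last n)))
    refine ⟨extS w t, by rw [hx]; exact ht, fun i => ?_⟩
    rcases i with i | i
    · exact i.elim
    · refine Fin.lastCases ?_ (fun i => ?_) i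
      · simpa [extS] using htr hwr
      · simpa [extS] using hwr (Sum.inr i)

/-- Every real point shares the signs of finitely many rational affine forms with a rational
point. -/
lemma rat_approx {ι : Type} [Fintype ι] (G : Set (AffForm ℚ ι)) (hG : G.Finite) (x : ι → ℝ) :
    ∃ y : ι → ℚ, SameQ G x (fun i => (y i : ℝ)) := by
  let e : Empty ⊕ Fin (Fintype.card ι) ≃ ι :=
    (Equiv.emptySum _ _).trans (Fintype.equivFin ι).symm
  obtain ⟨y, hy, hyr⟩ := rat_approx_aux _
    ((fun g : AffForm ℚ ι => ((fun i => g.1 (e i), g.2) : AffForm ℚ _)) '' G) (hG.image _)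
    (fun i => x (e i))
  choose r hr using hyr
  refine ⟨fun i => r (e.symm i), fun g hg => ?_⟩
  have := hy _ (mem_image_of_mem _ hg)
  rw [qev_comp] at this
  rw [this]
  have h2 := qev_comp e g (fun i => y (e.symm i))
  simp only [Equiv.symm_apply_apply] at h2
  rw [h2]
  simp only [hr]

/-! ### Boolean combinations -/

section Bool
variable {ι : Type} [Fintype ι]

lemma SameQ.symm {G : Set (AffForm ℚ ι)} {x y : ι → ℝ} (h : SameQ G x y) : SameQ G y x :=
  fun g hg => (h g hg).symm

lemma SameQ.mono {G G' : Set (AffForm ℚ ι)} (hG : G ⊆ G') {x y : ι → ℝ} (h : SameQ G' x y) :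
    SameQ G x y := fun g hg => h g (hG hg)

lemma SameL.symm {F : Set (AffForm ℤ ι)} {G : Set (AffForm ℚ ι)} {M : ℕ} {x y : ι → ℝ}
    (h : SameL F G M x y) : SameL F G M y x :=
  ⟨⟨fun f hf => (h.1.1 f hf).symm, fun i => (h.1.2 i).symm⟩, h.2.symm⟩

lemma SameL.mono {F F' : Set (AffForm ℤ ι)} {G G' : Set (AffForm ℚ ι)} {M M' : ℕ}
    (hF : F ⊆ F') (hG : G ⊆ G') (hM : M ∣ M') {x y : ι → ℝ}
    (h : SameL F' G' M' x y) : SameL F G M x y :=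
  ⟨⟨fun f hf => h.1.1 f (hF hf), fun i => (h.1.2 i).of_dvd (by exact_mod_cast hM)⟩, h.2.mono hG⟩

lemma QDet.imp {X Y : Set (ι → ℝ)} (hX : QDet X) (hY : QDet Y) :
    QDet {x | x ∈ X → x ∈ Y} := by
  obtain ⟨G, hG, h⟩ := hX
  obtain ⟨G', hG', h'⟩ := hY
  exact ⟨G ∪ G', hG.union hG', fun x y hxy hx hy => h' x y (hxy.mono subset_union_right)
    (hx (h y x (hxy.mono subset_union_left).symm hy))⟩

lemma LDet.imp {X Y : Set (ι → ℝ)} (hX : LDet X) (hY : LDet Y) :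
    LDet {x | x ∈ X → x ∈ Y} := by
  obtain ⟨F, G, M, hF, hG, hM, h⟩ := hX
  obtain ⟨F', G', M', hF', hG', hM', h'⟩ := hY
  exact ⟨F ∪ F', G ∪ G', M * M', hF.union hF', hG.union hG', Nat.mul_pos hM hM',
    fun x y hxy hx hy => h' x y
    (hxy.mono subset_union_right subset_union_right (Dvd.intro_left _ rfl))
    (hx (h y x (hxy.mono subset_union_left subset_union_left (Dvd.intro _ rfl)).symm hy))⟩

lemma QDet.inter {X Y : Set (ι → ℝ)} (hX : QDet X) (hY : QDet Y) : QDet (X ∩ Y) := by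
  obtain ⟨G, hG, h⟩ := hX
  obtain ⟨G', hG', h'⟩ := hY
  exact ⟨G ∪ G', hG.union hG', fun x y hxy hx => ⟨h x y (hxy.mono subset_union_left) hx.1,
    h' x y (hxy.mono subset_union_right) hx.2⟩⟩

lemma QDet.false : QDet (∅ : Set (ι → ℝ)) := ⟨∅, finite_empty, fun _ _ _ h => h⟩

lemma LDet.false : LDet (∅ : Set (ι → ℝ)) :=
  ⟨∅, ∅, 1, finite_empty, finite_empty, one_pos, fun _ _ _ h => h⟩

lemma QDet.forall {κ : Type} {s : Set κ} (hs : s.Finite) {X : κ → Set (ι → ℝ)}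
    (hX : ∀ k ∈ s, QDet (X k)) : QDet {x | ∀ k ∈ s, x ∈ X k} := by
  choose! G hG h using hX
  exact ⟨⋃ k ∈ s, G k, hs.biUnion hG, fun x y hxy hx k hk =>
    h k hk x y (hxy.mono (subset_biUnion_of_mem hk)) (hx k hk)⟩

lemma QDet.pos (g : AffForm ℚ ι) : QDet {x | 0 < qev g x} :=
  ⟨{g}, finite_singleton _, fun _ _ h hx => (sign_iffs (h g rfl)).1.1 hx⟩

lemma QDet.neg (g : AffForm ℚ ι) : QDet {x | qev g x < 0} :=
  ⟨{g}, finite_singleton _, fun _ _ h hx => (sign_iffs (h g rfl)).2.2.1 hx⟩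

lemma QDet.eq (g : AffForm ℚ ι) : QDet {x | qev g x = 0} :=
  ⟨{g}, finite_singleton _, fun _ _ h hx => (sign_iffs (h g rfl)).2.1.1 hx⟩

end Bool

/-! ### Universal quantification -/

lemma QDet.all {α : Type} [Fintype α] {n : ℕ} {X : Set (α ⊕ Fin (n + 1) → ℝ)} (hX : QDet X) :
    QDet {z : α ⊕ Fin n → ℝ | ∀ s, extS z s ∈ X} := by
  obtain ⟨G, hG, h⟩ := hX
  obtain ⟨G', hG', h'⟩ := real_step G hG
  refine ⟨G', hG', fun z w hzw hz s => ?_⟩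
  obtain ⟨t, ht, -⟩ := h' w z hzw.symm s
  exact h _ _ ht.symm (hz t)

/-- Closure under real quantification: the quantified real is split into its integer part, handled by
`int_step`, and its fractional part, handled by `real_step`. The two auxiliary forms `u` and `v`
keep the new fractional part in `[0, 1)`. -/
lemma LDet.all {α : Type} [Fintype α] {n : ℕ} {X : Set (α ⊕ Fin (n + 1) → ℝ)} (hX : LDet X) :
    LDet {z : α ⊕ Fin n → ℝ | ∀ s, extS z s ∈ X} := by
  classical
  obtain ⟨F, G, M, hF, hG, hM, h⟩ := hX
  obtain ⟨F', M', hF', hM', hZ⟩ := int_step F hF M hM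
  let u : AffForm ℚ (α ⊕ Fin (n + 1)) := (Pi.single (Sum.inr (Fin.last n)) 1, 0)
  let v : AffForm ℚ (α ⊕ Fin (n + 1)) := (Pi.single (Sum.inr (Fin.last n)) 1, -1)
  have hu : ∀ x, qev u x = x (Sum.inr (Fin.last n)) := fun x => by
    rw [qev_single]; simp
  have hv : ∀ x, qev v x = x (Sum.inr (Fin.last n)) - 1 := fun x => by
    rw [qev_single]; simp [sub_eq_add_neg]
  obtain ⟨G', hG', hR⟩ := real_step (G ∪ {u, v}) (hG.union (by simp))
  refine ⟨F', G', M', hF', hG', hM', fun z w hzw hz s => ?_⟩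
  obtain ⟨k, hk⟩ := hZ _ _ hzw.symm.1 ⌊s⌋
  obtain ⟨t, ht, -⟩ := hR _ _ hzw.symm.2 (Int.fract s)
  have h1 := ht u (by simp)
  have h2 := ht v (by simp)
  simp only [hu, hv, extS, Sum.elim_inr, Fin.snoc_last] at h1 h2
  have ht1 : t < 1 := by
    have := (sign_iffs h2).2.2.1 (by linarith [Int.fract_lt_one s]); linarith
  have ht0 : 0 ≤ t := by
    by_contra hc
    have := (sign_iffs h1).2.2.2 (not_le.1 hc); linarith [Int.fract_nonneg s]
  have hfl : ⌊(k + t : ℝ)⌋ = k := by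
    rw [Int.floor_eq_iff]; constructor <;> linarith
  have hfr : Int.fract (k + t : ℝ) = t := by
    rw [Int.fract, hfl]; ring
  refine h _ _ (SameL.symm ?_) (hz (k + t))
  refine ⟨?_, ?_⟩
  · rw [comp_extS (fun a : ℝ => ⌊a⌋), comp_extS (fun a : ℝ => ⌊a⌋), hfl]
    exact hk
  · rw [comp_extS Int.fract, comp_extS Int.fract, hfr]
    exact ht.mono subset_union_left

/-! ### Quantifier elimination for the two structures -/

section Atoms
open FirstOrder Language

lemma ls_term {ι : Type} [Fintype ι] (t : LsLang.Term ι) :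
    ∃ a : ι → ℤ, ∀ x : ι → ℝ, t.realize x = ∑ i, (a i : ℝ) * x i := by
  classical
  induction t with
  | var i =>
    refine ⟨Pi.single i 1, fun x => ?_⟩
    have := qev_single i 0 x
    simp only [qev] at this
    rw [Term.realize_var, ← add_zero (x i), ← Rat.cast_zero, ← this]
    simp [Pi.single_apply, apply_ite]
  | @func l f ts ih =>
    rcases l with _ | _ | _ | l
    · exact (show Empty from f).elim
    · exact (show Empty from f).elim
    · obtain ⟨a, ha⟩ := ih 0
      obtain ⟨b, hb⟩ := ih 1
      refine ⟨a + b, fun x => ?_⟩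
      have : (Term.func f ts).realize x = (ts 0).realize x + (ts 1).realize x := rfl
      rw [this, ha, hb]
      simp [add_mul, Finset.sum_add_distrib]
    · exact (show Empty from f).elim

lemma ss_term {ι : Type} [Fintype ι] (t : SsLang.Term ι) :
    ∃ g : AffForm ℚ ι, ∀ x : ι → ℝ, t.realize x = qev g x := by
  classical
  induction t with
  | var i => exact ⟨(Pi.single i 1, 0), fun x => by rw [qev_single]; simp⟩
  | @func l f ts ih =>
    rcases l with _ | _ | _ | l
    · refine ⟨(0, 1), fun x => ?_⟩
      have : (Term.func f ts).realize x = (1 : ℝ) := rfl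
      rw [this]; simp [qev]
    · exact (show Empty from f).elim
    · obtain ⟨a, ha⟩ := ih 0
      obtain ⟨b, hb⟩ := ih 1
      refine ⟨a + b, fun x => ?_⟩
      have : (Term.func f ts).realize x = (ts 0).realize x + (ts 1).realize x := rfl
      rw [this, ha, hb]
      simp [qev, add_mul, Finset.sum_add_distrib]; ring
    · exact (show Empty from f).elim

/-- Quantifier elimination for `⟨ℝ,+,<,1⟩`. -/
lemma ss_formula {α : Type} [Fintype α] {n : ℕ} (φ : SsLang.BoundedFormula α n) :
    QDet {z : α ⊕ Fin n → ℝ | φ.Realize (z ∘ Sum.inl) (z ∘ Sum.inr)} := by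
  induction φ with
  | falsum => exact QDet.false
  | equal t u =>
    obtain ⟨a, ha⟩ := ss_term t
    obtain ⟨b, hb⟩ := ss_term u
    convert QDet.eq (a - b) using 3 with z
    rw [qev_sub, ← ha, ← hb, sub_eq_zero]
    simp [BoundedFormula.Realize, Sum.elim_comp_inl_inr]
  | @rel n l R ts =>
    rcases l with _ | _ | _ | l
    · exact (show Empty from R).elim
    · exact (show Empty from R).elim
    · obtain ⟨a, ha⟩ := ss_term (ts 0)
      obtain ⟨b, hb⟩ := ss_term (ts 1)
      convert QDet.neg (a - b) using 3 with z
      rw [qev_sub, ← ha, ← hb, sub_neg]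
      have : (BoundedFormula.rel R ts).Realize (z ∘ Sum.inl) (z ∘ Sum.inr) ↔
        (ts 0).realize (Sum.elim (z ∘ Sum.inl) (z ∘ Sum.inr)) <
        (ts 1).realize (Sum.elim (z ∘ Sum.inl) (z ∘ Sum.inr)) := Iff.rfl
      rw [this, Sum.elim_comp_inl_inr]
    · exact (show Empty from R).elim
  | imp φ ψ h1 h2 => exact h1.imp h2
  | all φ ih => exact ih.all

/-- The atomic formulas of `⟨ℝ,+,<,ℤ⟩`. The value of `∑ aᵢ xᵢ` is that of `∑ aᵢ ⌊xᵢ⌋` up to the error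
`∑ aᵢ {xᵢ}`, which is at most `N = ∑ |aᵢ|`. It therefore suffices to compare both sums with the
integers in `[-N, N]`. -/
lemma lin_atom {ι : Type} [Fintype ι] (a : ι → ℤ) :
    LDet {x : ι → ℝ | ∑ i, (a i : ℝ) * x i < 0} ∧ LDet {x : ι → ℝ | ∑ i, (a i : ℝ) * x i = 0} ∧
    LDet {x : ι → ℝ | ∃ k : ℤ, ∑ i, (a i : ℝ) * x i = k} := by
  set N : ℤ := ∑ i, |a i| with hN
  let F : Set (AffForm ℤ ι) := (fun m : ℤ => (a, m)) '' Icc (-N) N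
  let G : Set (AffForm ℚ ι) := (fun m : ℤ => ((fun i => (a i : ℚ)), (m : ℚ))) '' Icc (-N) N
  have hF : F.Finite := (finite_Icc _ _).image _
  have hG : G.Finite := (finite_Icc _ _).image _
  have hdec : ∀ x : ι → ℝ, ∑ i, (a i : ℝ) * x i =
      (∑ i, a i * ⌊x i⌋ : ℤ) + ∑ i, (a i : ℝ) * Int.fract (x i) := fun x => by
    push_cast
    rw [← Finset.sum_add_distrib]
    refine Finset.sum_congr rfl fun i _ => ?_
    rw [← mul_add, Int.floor_add_fract]
  have hbd : ∀ x : ι → ℝ, |∑ i, (a i : ℝ) * Int.fract (x i)| ≤ N := fun x => by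
    refine (Finset.abs_sum_le_sum_abs _ _).trans ?_
    rw [hN]; push_cast
    refine Finset.sum_le_sum fun i _ => ?_
    rw [abs_mul]
    refine mul_le_of_le_one_right (abs_nonneg _) ?_
    rw [abs_of_nonneg (Int.fract_nonneg _)]
    exact (Int.fract_lt_one _).le
  have hN0 : 0 ≤ N := Finset.sum_nonneg fun i _ => abs_nonneg _
  have main : ∀ x y, SameL F G 1 x y →
      SignType.sign (∑ i, (a i : ℝ) * x i) = SignType.sign (∑ i, (a i : ℝ) * y i) := by
    intro x y hxy
    have hz : ∀ m, -N ≤ m → m ≤ N → SignType.sign (∑ i, a i * ⌊x i⌋ + m) =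
      SignType.sign (∑ i, a i * ⌊y i⌋ + m) := fun m h1 h2 => hxy.1.1 _ ⟨m, ⟨h1, h2⟩, rfl⟩
    have hq : ∀ m : ℤ, -N ≤ m → m ≤ N → SignType.sign (∑ i, (a i : ℝ) * Int.fract (x i) + m) =
      SignType.sign (∑ i, (a i : ℝ) * Int.fract (y i) + m) := fun m h1 h2 => by
      simpa [qev] using hxy.2 _ ⟨m, ⟨h1, h2⟩, rfl⟩
    rw [hdec x, hdec y]
    have hbx := abs_le.1 (hbd x)
    have hby := abs_le.1 (hbd y)
    generalize ∑ i, a i * ⌊x i⌋ = p at *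
    generalize ∑ i, a i * ⌊y i⌋ = p' at *
    by_cases h1 : N < p
    · have h2 := (sign_iffs (hz (-N) le_rfl (by linarith))).1.1 (by linarith)
      have h1' : (N : ℝ) < p := by exact_mod_cast h1
      have h2' : (N : ℝ) < p' := by have : N < p' := by linarith
                                    exact_mod_cast this
      rw [sign_pos (by linarith), sign_pos (by linarith)]
    by_cases h3 : p < -N
    · have h2 := (sign_iffs (hz N (by linarith) le_rfl)).2.2.1 (by linarith)
      have h1' : (p : ℝ) < -N := by exact_mod_cast h3
      have h2' : (p' : ℝ) < -N := by have : p' < -N := by linarith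
                                     exact_mod_cast this
      rw [sign_neg (by linarith), sign_neg (by linarith)]
    push Not at h1 h3
    have h2 := (sign_iffs (hz (-p) (by linarith) (by linarith))).2.1.1 (by linarith)
    obtain rfl : p' = p := by linarith
    rw [add_comm, hq p' h3 h1, add_comm]
  refine ⟨⟨F, G, 1, hF, hG, one_pos, fun x y h hx => (sign_iffs (main x y h)).2.2.1 hx⟩,
    ⟨F, G, 1, hF, hG, one_pos, fun x y h hx => (sign_iffs (main x y h)).2.1.1 hx⟩,
    F, G, 1, hF, hG, one_pos, fun x y h hx => ?_⟩
  obtain ⟨k, hk⟩ := hx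
  have hbx := abs_le.1 (hbd x)
  have h1 : ∑ i, (a i : ℝ) * Int.fract (x i) = ((k - ∑ i, a i * ⌊x i⌋ : ℤ) : ℝ) := by
    have := hdec x
    push_cast at this ⊢
    linarith
  generalize k - ∑ i, a i * ⌊x i⌋ = m at *
  have hm1 : -N ≤ m := by rw [h1] at hbx; exact_mod_cast hbx.1
  have hm2 : m ≤ N := by rw [h1] at hbx; exact_mod_cast hbx.2
  have hq := h.2 _ ⟨-m, ⟨by linarith, by linarith⟩, rfl⟩
  have h2 := (sign_iffs hq).2.1.1 (by simp [qev, h1])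
  refine ⟨∑ i, a i * ⌊y i⌋ + m, ?_⟩
  rw [hdec y]
  simp [qev] at h2
  push_cast
  linarith

/-- Quantifier elimination for `⟨ℝ,+,<,ℤ⟩`, in the language of signs and residues. -/
lemma ls_formula {α : Type} [Fintype α] {n : ℕ} (φ : LsLang.BoundedFormula α n) :
    LDet {z : α ⊕ Fin n → ℝ | φ.Realize (z ∘ Sum.inl) (z ∘ Sum.inr)} := by
  induction φ with
  | falsum => exact LDet.false
  | equal t u =>
    obtain ⟨a, ha⟩ := ls_term t
    obtain ⟨b, hb⟩ := ls_term u
    convert (lin_atom (a - b)).2.1 using 3 with z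
    simp only [Pi.sub_apply, Int.cast_sub, sub_mul, Finset.sum_sub_distrib]
    rw [← ha, ← hb, sub_eq_zero]
    simp [BoundedFormula.Realize, Sum.elim_comp_inl_inr]
  | @rel n l R ts =>
    rcases l with _ | _ | _ | l
    · exact (show Empty from R).elim
    · obtain ⟨a, ha⟩ := ls_term (ts 0)
      convert (lin_atom a).2.2 using 3 with z
      rw [← ha]
      have : (BoundedFormula.rel R ts).Realize (z ∘ Sum.inl) (z ∘ Sum.inr) ↔ ∃ k : ℤ,
        (ts 0).realize (Sum.elim (z ∘ Sum.inl) (z ∘ Sum.inr)) = (k : ℝ) := Iff.rfl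
      rw [this, Sum.elim_comp_inl_inr]
    · obtain ⟨a, ha⟩ := ls_term (ts 0)
      obtain ⟨b, hb⟩ := ls_term (ts 1)
      convert (lin_atom (a - b)).1 using 3 with z
      simp only [Pi.sub_apply, Int.cast_sub, sub_mul, Finset.sum_sub_distrib]
      rw [← ha, ← hb, sub_neg]
      have : (BoundedFormula.rel R ts).Realize (z ∘ Sum.inl) (z ∘ Sum.inr) ↔
        (ts 0).realize (Sum.elim (z ∘ Sum.inl) (z ∘ Sum.inr)) <
        (ts 1).realize (Sum.elim (z ∘ Sum.inl) (z ∘ Sum.inr)) := Iff.rfl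
      rw [this, Sum.elim_comp_inl_inr]
    · exact (show Empty from R).elim
  | imp φ ψ h1 h2 => exact h1.imp h2
  | all φ ih => exact ih.all

/-- A point seen with an empty tuple of quantified variables. -/
def ext0 {ι : Type} (x : ι → ℝ) : ι ⊕ Fin 0 → ℝ := Sum.elim x Fin.elim0

lemma SsDefinable.qdet {n : ℕ} {X : Set (Fin n → ℝ)} (hX : SsDefinable X) : QDet X := by
  obtain ⟨φ, rfl⟩ := Set.empty_definable_iff.1 hX
  obtain ⟨G, hG, h⟩ := ss_formula φ
  refine ⟨(fun g => (fun i => g.1 (Sum.inl i), g.2)) '' G, hG.image _, fun x y hxy hx => ?_⟩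
  have hev : ∀ (g : AffForm ℚ (Fin n ⊕ Fin 0)) x,
      qev g (ext0 x) = qev (fun i => g.1 (Sum.inl i), g.2) x := fun g x => by
    simp [qev, ext0, Fintype.sum_sum_type]
  have hre : ∀ x : Fin n → ℝ, φ.Realize x ↔
      BoundedFormula.Realize φ (ext0 x ∘ Sum.inl) (ext0 x ∘ Sum.inr) := fun x => by
    rw [Formula.Realize]
    exact iff_of_eq (congrArg₂ _ rfl (Subsingleton.elim _ _))
  refine (hre y).2 (h _ _ (fun g hg => ?_) ((hre x).1 hx))
  rw [hev, hev]
  exact hxy _ (mem_image_of_mem _ hg)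

lemma LsDefinable.ldet {n : ℕ} {X : Set (Fin n → ℝ)} (hX : LsDefinable X) : LDet X := by
  obtain ⟨φ, rfl⟩ := Set.empty_definable_iff.1 hX
  obtain ⟨F, G, M, hF, hG, hM, h⟩ := ls_formula φ
  refine ⟨(fun g => (fun i => g.1 (Sum.inl i), g.2)) '' F,
    (fun g => (fun i => g.1 (Sum.inl i), g.2)) '' G, M, hF.image _, hG.image _, hM,
    fun x y hxy hx => ?_⟩
  have hre : ∀ x : Fin n → ℝ, φ.Realize x ↔
      BoundedFormula.Realize φ (ext0 x ∘ Sum.inl) (ext0 x ∘ Sum.inr) := fun x => by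
    rw [Formula.Realize]
    exact iff_of_eq (congrArg₂ _ rfl (Subsingleton.elim _ _))
  refine (hre y).2 (h _ _ ⟨⟨fun f hf => ?_, fun i => ?_⟩, fun g hg => ?_⟩ ((hre x).1 hx))
  · simpa [zev, ext0, Fintype.sum_sum_type] using hxy.1.1 _ (mem_image_of_mem _ hf)
  · rcases i with i | i
    · exact hxy.1.2 i
    · exact i.elim0
  · simpa [qev, ext0, Fintype.sum_sum_type] using hxy.2 _ (mem_image_of_mem _ hg)

/-! ### Sign-determined sets are definable -/

lemma exists_common_den {ι : Type} [Finite ι] (a : ι → ℚ) :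
    ∃ d : ℕ, 0 < d ∧ ∃ z : ι → ℤ, ∀ i, a i * d = z i := by
  have := Fintype.ofFinite ι
  have h : ∀ i, ∃ c : ℕ, ∏ j, (a j).den = (a i).den * c := fun i =>
    Finset.dvd_prod_of_mem _ (Finset.mem_univ i)
  choose c hc using h
  refine ⟨∏ j, (a j).den, Finset.prod_pos fun j _ => (a j).den_pos, fun i => (a i).num * c i,
    fun i => ?_⟩
  rw [hc i]; push_cast
  rw [← mul_assoc, Rat.mul_den_eq_num]

/-- Terms realize the affine functions with natural coefficients and positive constant term; the
constant is kept positive because `SsLang` has no symbol for `0`. -/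
lemma ss_term_exists {ι : Type} [Fintype ι] (a : ι → ℕ) (m : ℕ) :
    ∃ t : SsLang.Term ι, ∀ x : ι → ℝ, t.realize x = 1 + m + ∑ i, (a i : ℝ) * x i := by
  classical
  have hadd : ∀ t u : SsLang.Term ι, ∃ v : SsLang.Term ι, ∀ x : ι → ℝ,
      v.realize x = t.realize x + u.realize x := fun t u =>
    ⟨Term.func (l := 2) (show SsLang.Functions 2 from ()) ![t, u], fun x => rfl⟩
  obtain ⟨one, hone⟩ : ∃ v : SsLang.Term ι, ∀ x : ι → ℝ, v.realize x = 1 :=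
    ⟨Term.func (l := 0) (show SsLang.Functions 0 from ()) ![], fun x => rfl⟩
  have hnat : ∀ (t u : SsLang.Term ι) (k : ℕ), ∃ v : SsLang.Term ι, ∀ x : ι → ℝ,
      v.realize x = t.realize x + k * u.realize x := by
    intro t u k
    induction k with
    | zero => exact ⟨t, by simp⟩
    | succ k ih =>
      obtain ⟨v, hv⟩ := ih
      obtain ⟨w, hw⟩ := hadd v u
      exact ⟨w, fun x => by rw [hw, hv]; push_cast; ring⟩
  have hsum : ∀ s : Finset ι, ∃ t : SsLang.Term ι, ∀ x : ι → ℝ,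
      t.realize x = 1 + m + ∑ i ∈ s, (a i : ℝ) * x i := by
    intro s
    induction s using Finset.induction_on with
    | empty =>
      obtain ⟨v, hv⟩ := hnat one one m
      exact ⟨v, fun x => by rw [hv, hone]; simp⟩
    | insert i s hi ih =>
      obtain ⟨t, ht⟩ := ih
      obtain ⟨v, hv⟩ := hnat t (Term.var i) (a i)
      refine ⟨v, fun x => ?_⟩
      rw [hv, ht, Finset.sum_insert hi, Term.realize_var]; ring
  exact hsum Finset.univ

lemma pos_definable {ι : Type} [Fintype ι] (g : AffForm ℚ ι) :
    (∅ : Set ℝ).Definable SsLang {x : ι → ℝ | 0 < qev g x} := by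
  obtain ⟨d, hd, z, hz⟩ := exists_common_den (fun o : Option ι => o.elim g.2 g.1)
  obtain ⟨t, ht⟩ := ss_term_exists (fun i => (-z (some i)).toNat) (-z none).toNat
  obtain ⟨u, hu⟩ := ss_term_exists (fun i => (z (some i)).toNat) (z none).toNat
  rw [Set.empty_definable_iff]
  refine ⟨Relations.formula₂ (show SsLang.Relations 2 from ()) t u, ?_⟩
  ext x
  have h1 : (Relations.formula₂ (show SsLang.Relations 2 from ()) t u).Realize x ↔
      t.realize x < u.realize x := by
    rw [Formula.realize_rel₂]; exact Iff.rfl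
  have hn : ∀ k : ℤ, ((k.toNat : ℕ) : ℝ) - ((-k).toNat : ℕ) = k := fun k => by
    have := Int.toNat_sub_toNat_neg k
    exact_mod_cast this
  have h2 : u.realize x - t.realize x = d * qev g x := by
    have e1 : ∀ i, (g.1 i : ℝ) * d = z (some i) := fun i => by exact_mod_cast hz (some i)
    have e2 : (g.2 : ℝ) * d = z none := by exact_mod_cast hz none
    have e3 : (d : ℝ) * qev g x = ∑ i, (z (some i) : ℝ) * x i + z none := by
      rw [qev, mul_add, Finset.mul_sum, ← e2, mul_comm (d : ℝ) (g.2 : ℝ)]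
      congr 1
      refine Finset.sum_congr rfl fun i _ => ?_
      rw [← e1]; ring
    have e4 : ∑ i, (z (some i) : ℝ) * x i = ∑ i, (((z (some i)).toNat : ℕ) : ℝ) * x i -
        ∑ i, (((-z (some i)).toNat : ℕ) : ℝ) * x i := by
      rw [← Finset.sum_sub_distrib]
      refine Finset.sum_congr rfl fun i _ => ?_
      rw [← sub_mul, hn]
    rw [e3, e4, ht, hu]
    linarith [hn (z none)]
  have hd' : (0 : ℝ) < d := by exact_mod_cast hd
  show 0 < qev g x ↔ _
  rw [mem_ofPred_eq, h1, ← sub_pos (b := t.realize x), h2, mul_pos_iff_of_pos_left hd']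

lemma sign_definable {ι : Type} [Fintype ι] (g : AffForm ℚ ι) (ε : SignType) :
    (∅ : Set ℝ).Definable SsLang {x : ι → ℝ | SignType.sign (qev g x) = ε} := by
  have hp := pos_definable g
  have hn : (∅ : Set ℝ).Definable SsLang {x : ι → ℝ | qev g x < 0} := by
    convert pos_definable ((-1 : ℚ) • g) using 3 with x
    rw [qev_smul]; simp
  cases ε
  · convert (hp.union hn).compl using 1
    ext x
    simp [le_antisymm_iff]
  · simpa [sign_eq_neg_one_iff] using hn
  · simpa [sign_eq_one_iff] using hp

lemma QDet.definable {ι : Type} [Fintype ι] {X : Set (ι → ℝ)} (hX : QDet X) :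
    (∅ : Set ℝ).Definable SsLang X := by
  obtain ⟨G, hG, h⟩ := hX
  induction G, hG using Set.Finite.induction_on generalizing X with
  | empty =>
    rcases X.eq_empty_or_nonempty with rfl | ⟨x, hx⟩
    · exact Set.definable_empty
    · have : X = univ := eq_univ_of_forall fun y => h x y (fun _ h => absurd h (by simp)) hx
      rw [this]; exact Set.definable_univ
  | @insert g G hg hG ih =>
    let Y : SignType → Set (ι → ℝ) := fun ε =>
      {x | ∃ y ∈ X, SignType.sign (qev g y) = ε ∧ SameQ G y x}
    have hY : ∀ ε, (∅ : Set ℝ).Definable SsLang (Y ε) := fun ε => ih fun x x' hx ⟨y, h1, h2, h3⟩ =>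
      ⟨y, h1, h2, fun f hf => (h3 f hf).trans (hx f hf)⟩
    have hXY : X = ⋃ ε ∈ (Finset.univ : Finset SignType),
        {x : ι → ℝ | SignType.sign (qev g x) = ε} ∩ Y ε := by
      ext x
      simp only [Finset.mem_univ, iUnion_true, mem_iUnion, mem_inter_iff, mem_ofPred_eq]
      refine ⟨fun hx => ⟨_, rfl, x, hx, rfl, fun _ _ => rfl⟩, ?_⟩
      rintro ⟨ε, h1, y, h2, h3, h4⟩
      refine h y x (fun f hf => ?_) h2
      rcases hf with rfl | hf
      · rw [h1, h3]
      · exact h4 f hf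
    rw [hXY]
    exact Set.definable_biUnion_finset (fun ε => (sign_definable g ε).inter (hY ε)) _
end Atoms

/-! ### Cells, regions and rays -/

section Regions
variable {ι κ : Type} [Fintype ι] [Fintype κ]

lemma LDet.compl {X : Set (ι → ℝ)} (hX : LDet X) : LDet Xᶜ := hX.imp LDet.false

lemma QDet.univ : QDet (Set.univ : Set (ι → ℝ)) :=
  ⟨∅, finite_empty, fun _ _ _ h => h⟩

lemma QDet.inl {X : Set (ι → ℝ)} (hX : QDet X) :
    QDet {z : ι ⊕ κ → ℝ | (fun i => z (Sum.inl i)) ∈ X} := by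
  obtain ⟨G, hG, h⟩ := hX
  refine ⟨(fun g => (Sum.elim g.1 0, g.2)) '' G, hG.image _, fun x y hxy => h _ _ fun g hg => ?_⟩
  simpa [qev, Fintype.sum_sum_type] using hxy _ (mem_image_of_mem _ hg)

lemma QDet.inr {X : Set (κ → ℝ)} (hX : QDet X) :
    QDet {z : ι ⊕ κ → ℝ | (fun i => z (Sum.inr i)) ∈ X} := by
  obtain ⟨G, hG, h⟩ := hX
  refine ⟨(fun g => (Sum.elim 0 g.1, g.2)) '' G, hG.image _, fun x y hxy => h _ _ fun g hg => ?_⟩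
  simpa [qev, Fintype.sum_sum_type] using hxy _ (mem_image_of_mem _ hg)

/-- A nonempty sign-determined set has a rational point. -/
lemma QDet.exists_rat {X : Set (ι → ℝ)} (hX : QDet X) (hne : X.Nonempty) :
    ∃ y : ι → ℚ, (fun i => (y i : ℝ)) ∈ X := by
  obtain ⟨G, hG, h⟩ := hX
  obtain ⟨x, hx⟩ := hne
  obtain ⟨y, hy⟩ := rat_approx G hG x
  exact ⟨y, h _ _ hy hx⟩

/-- On each unit cell an `LDet` set is a Boolean combination of rational half-spaces. -/
lemma LDet.cell {X : Set (ι → ℝ)} (hX : LDet X) (k : ι → ℤ) :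
    QDet {x | (∀ i, ⌊x i⌋ = k i) ∧ x ∈ X} := by
  classical
  obtain ⟨F, G, M, hF, hG, hM, h⟩ := hX
  refine ⟨range (fun i : ι => ((Pi.single i 1, -(k i : ℚ)) : AffForm ℚ ι)) ∪
    range (fun i : ι => ((Pi.single i 1, -(k i : ℚ) - 1) : AffForm ℚ ι)) ∪
    (fun g : AffForm ℚ ι => ((g.1, g.2 - ∑ i, g.1 i * (k i : ℚ)) : AffForm ℚ ι)) '' G,
    ((finite_range _).union (finite_range _)).union (hG.image _), fun x y hxy hx => ?_⟩
  have hfl : ∀ i, ⌊y i⌋ = k i := fun i => by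
    have h1 := hxy _ (Or.inl (Or.inl (mem_range_self i)))
    have h2 := hxy _ (Or.inl (Or.inr (mem_range_self i)))
    rw [qev_single, qev_single] at h1 h2
    push_cast at h1 h2
    have h3 := Int.floor_eq_iff.1 (hx.1 i)
    have h4 := (sign_iffs h1).2.2
    have h5 := (sign_iffs h2).2.2.1 (by linarith)
    refine Int.floor_eq_iff.2 ⟨?_, by linarith⟩
    by_contra hc
    have := h4.2 (by linarith); linarith
  refine ⟨hfl, h x y ⟨⟨fun f _ => ?_, fun i => ?_⟩, fun g hg => ?_⟩ hx.2⟩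
  · simp only [hfl, hx.1]
  · simp only [hfl, hx.1]; rfl
  · have h1 := hxy _ (Or.inr (mem_image_of_mem _ hg))
    have h2 : ∀ x : ι → ℝ, (∀ i, ⌊x i⌋ = k i) →
        qev ((g.1, g.2 - ∑ i, g.1 i * k i) : AffForm ℚ ι) x = qev g fun i => Int.fract (x i) := by
      intro x hx
      simp only [qev, Int.fract, hx, mul_sub, Finset.sum_sub_distrib]
      push_cast; ring
    rwa [h2 x hx.1, h2 y hfl] at h1

/-- The half-open cube `[-B, B)^ι`, a finite union of unit cells. -/
def Box (ι : Type) (B : ℕ) : Set (ι → ℝ) := {x | ∀ i, -(B : ℝ) ≤ x i ∧ x i < B}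

lemma LDet.box {X : Set (ι → ℝ)} (hX : LDet X) (B : ℕ) : QDet (X ∩ Box ι B) := by
  classical
  have hu : LDet (Set.univ : Set (ι → ℝ)) :=
    ⟨∅, ∅, 1, finite_empty, finite_empty, one_pos, fun _ _ _ h => h⟩
  have hB : QDet (Box ι B) := by
    refine ⟨range (fun i : ι => (Pi.single i 1, (B : ℚ))) ∪
      range (fun i : ι => (Pi.single i 1, -(B : ℚ))), (finite_range _).union (finite_range _),
      fun x y hxy hx i => ?_⟩
    have h1 := hxy _ (Or.inl (mem_range_self i))
    have h2 := hxy _ (Or.inr (mem_range_self i))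
    rw [qev_single, qev_single] at h1 h2
    push_cast at h1 h2
    have h3 := hx i
    constructor
    · by_contra hc
      have := (sign_iffs h1).2.2.2 (by linarith); linarith
    · linarith [(sign_iffs h2).2.2.1 (by linarith)]
  have h1 := hB.inter (QDet.forall (finite_Icc (fun _ : ι => -(B : ℤ)) (fun _ : ι => (B : ℤ)))
    (fun k _ => (hu.cell k).imp (hX.cell k)))
  convert h1 using 1
  ext x
  constructor
  · rintro ⟨hx, hb⟩
    exact ⟨hb, fun k _ hk => ⟨hk.1, hx⟩⟩
  · rintro ⟨hb, hx⟩
    refine ⟨(hx (fun i => ⌊x i⌋) ⟨fun i => ?_, fun i => ?_⟩ ⟨fun i => rfl, trivial⟩).2, hb⟩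
    · exact Int.le_floor.2 (by push_cast; exact (hb i).1)
    · exact Int.floor_le_iff.2 (by push_cast; linarith [(hb i).2])

/-- The linear part of an integral affine form, evaluated at a real point. -/
def rlin (f : AffForm ℤ ι) (x : ι → ℝ) : ℝ := ∑ i, (f.1 i : ℝ) * x i

lemma rlin_add (f : AffForm ℤ ι) (x y : ι → ℝ) : rlin f (x + y) = rlin f x + rlin f y := by
  simp [rlin, mul_add, Finset.sum_add_distrib]

lemma rlin_sub (f : AffForm ℤ ι) (x y : ι → ℝ) : rlin f (x - y) = rlin f x - rlin f y := by
  simp [rlin, mul_sub, Finset.sum_sub_distrib]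

lemma rlin_smul (f : AffForm ℤ ι) (t : ℝ) (y : ι → ℝ) : rlin f (t • y) = t * rlin f y := by
  simp only [rlin, Finset.mul_sum, Pi.smul_apply, smul_eq_mul]
  exact Finset.sum_congr rfl fun i _ => by ring

/-- The sum of the absolute values of all coefficients; it bounds the difference between the linear part
of `f` at `x` and the value of `f` at `⌊x⌋`. -/
def height (f : AffForm ℤ ι) : ℕ := ∑ i, (f.1 i).natAbs + f.2.natAbs

lemma height_cast (f : AffForm ℤ ι) : (height f : ℝ) = ∑ i, |(f.1 i : ℝ)| + |(f.2 : ℝ)| := by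
  simp [height, Nat.cast_natAbs]

lemma rlin_le (f : AffForm ℤ ι) (x : ι → ℝ) (b : ℝ) (hb : 0 ≤ b) (h : ∀ i, |x i| ≤ b) :
    |rlin f x| ≤ height f * b := by
  rw [height_cast, add_mul, Finset.sum_mul]
  have : |rlin f x| ≤ ∑ i, |(f.1 i : ℝ)| * b := by
    refine (Finset.abs_sum_le_sum_abs _ _).trans (Finset.sum_le_sum fun i _ => ?_)
    rw [abs_mul]
    exact mul_le_mul_of_nonneg_left (h i) (abs_nonneg _)
  have : 0 ≤ |(f.2 : ℝ)| * b := by positivity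
  linarith

lemma floor_est (f : AffForm ℤ ι) (x : ι → ℝ) :
    |rlin f x - (zev f fun i => ⌊x i⌋ : ℤ)| ≤ height f := by
  have h1 : rlin f x - (zev f fun i => ⌊x i⌋ : ℤ) =
      rlin f (fun i => Int.fract (x i)) - f.2 := by
    simp only [rlin, zev, Int.fract, mul_sub, Finset.sum_sub_distrib]
    push_cast; ring
  rw [h1, height_cast]
  have h2 : |rlin f (fun i => Int.fract (x i))| ≤ ∑ i, |(f.1 i : ℝ)| := by
    refine (Finset.abs_sum_le_sum_abs _ _).trans (Finset.sum_le_sum fun i _ => ?_)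
    rw [abs_mul]
    refine mul_le_of_le_one_right (abs_nonneg _) ?_
    rw [abs_of_nonneg (Int.fract_nonneg _)]
    exact (Int.fract_lt_one _).le
  exact (abs_sub _ _).trans (by linarith)

/-- The points at which the forms with `σ f = 0` have linear part at most `r` in absolute value, while
those with `σ f = ±1` have linear part of sign `σ f` and absolute value greater than `R`. -/
def Region (F : Finset (AffForm ℤ ι)) (σ : AffForm ℤ ι → ℤ) (r R : ℕ) : Set (ι → ℝ) :=
  {x | ∀ f ∈ F, (σ f = 0 → |rlin f x| ≤ r) ∧ (σ f ≠ 0 → R < σ f * rlin f x)}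

lemma rlin_qev (f : AffForm ℤ ι) (c d : ℚ) (x : ι → ℝ) :
    qev ((fun i => c * f.1 i, d) : AffForm ℚ ι) x = c * rlin f x + d := by
  simp only [qev, rlin, Finset.mul_sum]; push_cast
  congr 1
  exact Finset.sum_congr rfl fun i _ => by ring

lemma Region.qdet (F : Finset (AffForm ℤ ι)) (σ : AffForm ℤ ι → ℤ) (r R : ℕ) :
    QDet (Region F σ r R) := by
  refine QDet.forall F.finite_toSet (X := fun f => {x | (σ f = 0 → |rlin f x| ≤ r) ∧
    (σ f ≠ 0 → R < σ f * rlin f x)}) fun f _ => ?_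
  by_cases h : σ f = 0
  · convert ((QDet.pos (fun i => (1 : ℚ) * f.1 i, -(r : ℚ))).imp QDet.false).inter
      ((QDet.neg (fun i => (1 : ℚ) * f.1 i, (r : ℚ))).imp QDet.false) using 1
    ext x
    simp only [h, rlin_qev, mem_inter_iff, mem_ofPred_eq, mem_empty_iff_false, imp_false, abs_le]
    push_cast
    constructor
    · rintro ⟨h1, -⟩
      have := h1 trivial
      constructor <;> linarith [this.1, this.2]
    · rintro ⟨h1, h2⟩
      exact ⟨fun _ => ⟨by linarith, by linarith⟩, fun h => h.elim⟩
  · convert QDet.pos (fun i => ((σ f : ℤ) : ℚ) * f.1 i, -(R : ℚ)) using 1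
    ext x
    simp only [h, rlin_qev, mem_ofPred_eq]
    push_cast
    constructor
    · rintro ⟨-, h1⟩
      linarith [h1 h]
    · intro h1
      exact ⟨by simp, fun _ => by linarith⟩

variable {F : Finset (AffForm ℤ ι)} {σ : AffForm ℤ ι → ℤ} {r R : ℕ}

/-- Within a region, translation by a vector of `M ℤ^ι` killed by the small forms preserves
`SameL F G M`. When `R` dominates the heights, the sign of a large form at the integer part is
constant on the region. -/
lemma region_shift {G : Set (AffForm ℚ ι)} {M : ℕ} (hσ : ∀ f, σ f = 0 ∨ σ f = 1 ∨ σ f = -1)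
    (hR : ∀ f ∈ F, height f ≤ R) {x z : ι → ℝ} (hx : x ∈ Region F σ r R)
    (hxz : x + z ∈ Region F σ r R) (hz : ∀ i, ∃ m : ℤ, z i = ((M * m : ℤ) : ℝ))
    (hlin : ∀ f ∈ F, σ f = 0 → rlin f z = 0) : SameL (F : Set (AffForm ℤ ι)) G M x (x + z) := by
  choose m hm using hz
  have hfl : ∀ i, ⌊(x + z) i⌋ = ⌊x i⌋ + M * m i := fun i => by
    rw [Pi.add_apply, hm, Int.floor_add_intCast]
  refine ⟨⟨fun f hf => ?_, fun i => ?_⟩, fun g hg => ?_⟩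
  · have key : ∀ y ∈ Region F σ r R, (σ f = 1 → SignType.sign (zev f fun i => ⌊y i⌋) = 1) ∧
        (σ f = -1 → SignType.sign (zev f fun i => ⌊y i⌋) = -1) := by
      intro y hy
      have h1 := abs_le.1 (floor_est f y)
      have h2 : (height f : ℝ) ≤ R := by exact_mod_cast hR f hf
      have h3 := (hy f hf).2
      refine ⟨fun h => sign_pos ?_, fun h => sign_neg ?_⟩
      · have := h3 (by simp [h])
        rw [h] at this
        push_cast at this
        have : (0 : ℝ) < (zev f fun i => ⌊y i⌋ : ℤ) := by linarith
        exact_mod_cast this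
      · have := h3 (by simp [h])
        rw [h] at this
        push_cast at this
        have : ((zev f fun i => ⌊y i⌋ : ℤ) : ℝ) < 0 := by linarith
        exact_mod_cast this
    rcases hσ f with h | h | h
    · have h1 := hlin f hf h
      have h2 : ∑ i, f.1 i * (M * m i) = 0 := by
        simp only [rlin, hm] at h1
        exact_mod_cast h1
      congr 1
      simp only [zev, hfl, mul_add, Finset.sum_add_distrib, h2]; ring
    · rw [(key x hx).1 h, (key _ hxz).1 h]
    · rw [(key x hx).2 h, (key _ hxz).2 h]
  · simp only [hfl]
    exact Int.modEq_iff_dvd.2 ⟨m i, by ring⟩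
  · congr 2
    funext i
    rw [Pi.add_apply, hm, Int.fract_add_intCast]

/-- Along every rational line, membership in `X` is eventually constant. -/
def EvConst (X : Set (ι → ℝ)) : Prop :=
  ∀ x v : ι → ℚ, ∃ t₀ : ℝ, ∀ t ≥ t₀, ∀ t' ≥ t₀,
    ((fun i => (x i : ℝ)) + t • (fun i => (v i : ℝ)) ∈ X ↔
      (fun i => (x i : ℝ)) + t' • (fun i => (v i : ℝ)) ∈ X)

/-- Inside a region, moving in a rational direction along which the small forms are constant and the
large forms do not get smaller does not change membership in `X`: along the ray membership is
periodic by `region_shift`, and eventually constant by hypothesis. -/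
lemma ray {X : Set (ι → ℝ)} {G : Set (AffForm ℚ ι)} {M : ℕ} (hM : 0 < M)
    (hX : ∀ x y, SameL (F : Set (AffForm ℤ ι)) G M x y → x ∈ X → y ∈ X) (hev : EvConst X)
    (hσ : ∀ f, σ f = 0 ∨ σ f = 1 ∨ σ f = -1) (hR : ∀ f ∈ F, height f ≤ R) (x w : ι → ℚ)
    (hx : (fun i => (x i : ℝ)) ∈ Region F σ r R)
    (hw : ∀ f ∈ F, (σ f = 0 → rlin f (fun i => (w i : ℝ)) = 0) ∧
      0 ≤ σ f * rlin f (fun i => (w i : ℝ))) :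
    (fun i => (x i : ℝ)) ∈ X ↔ (fun i => (x i : ℝ)) + (fun i => (w i : ℝ)) ∈ X := by
  obtain ⟨t₀, ht₀⟩ := hev x w
  obtain ⟨d, hd, z, hz⟩ := exists_common_den w
  set x' : ι → ℝ := fun i => (x i : ℝ)
  set w' : ι → ℝ := fun i => (w i : ℝ)
  have hreg : ∀ t : ℝ, 0 ≤ t → x' + t • w' ∈ Region F σ r R := by
    intro t ht f hf
    rw [rlin_add, rlin_smul]
    refine ⟨fun h => ?_, fun h => ?_⟩
    · rw [(hw f hf).1 h]; simpa using (hx f hf).1 h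
    · have := (hx f hf).2 h
      nlinarith [mul_nonneg ht (hw f hf).2]
  have hper : ∀ (t : ℝ) (N : ℕ), 0 ≤ t →
      (x' + t • w' ∈ X ↔ x' + (t + N * (M * d)) • w' ∈ X) := by
    intro t N ht
    have h1 : x' + (t + N * (M * d)) • w' = (x' + t • w') + ((N * (M * d) : ℝ) • w') := by
      rw [add_smul, add_assoc]
    have h2 : SameL (F : Set (AffForm ℤ ι)) G M (x' + t • w')
        ((x' + t • w') + ((N * (M * d) : ℝ) • w')) := by
      refine region_shift hσ hR (hreg t ht) ?_ (fun i => ⟨N * z i, ?_⟩) fun f hf h => ?_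
      · rw [← h1]; exact hreg _ (by positivity)
      · have : (w i : ℝ) * d = z i := by exact_mod_cast hz i
        simp only [Pi.smul_apply, smul_eq_mul, w']
        push_cast
        rw [← this]; ring
      · rw [rlin_smul, (hw f hf).1 h, mul_zero]
    rw [h1]
    exact ⟨hX _ _ h2, hX _ _ h2.symm⟩
  obtain ⟨N, hN⟩ := exists_nat_ge t₀
  have hMd : (1 : ℝ) ≤ M * d := by
    have : 1 ≤ M * d := Nat.mul_pos hM hd
    exact_mod_cast this
  have hN' : (N : ℝ) ≤ N * (M * d) := le_mul_of_one_le_right (Nat.cast_nonneg _) hMd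
  have h0 := hper 0 N le_rfl
  have h1 := hper 1 N zero_le_one
  have h2 := ht₀ (0 + N * (M * d)) (by linarith) (1 + N * (M * d)) (by linarith)
  rw [zero_smul, add_zero] at h0
  rw [one_smul] at h1
  exact h0.trans (h2.trans h1.symm)

end Regions

/-! ### Invariance inside a region -/

section Main
variable {ι : Type} [Fintype ι] {F : Finset (AffForm ℤ ι)} {σ : AffForm ℤ ι → ℤ} {r R : ℕ}

lemma exists_nat_mul_ge {κ : Type} (F : Finset κ) (a b : κ → ℝ) (h : ∀ f ∈ F, 0 < a f) :
    ∃ N : ℕ, ∀ f ∈ F, b f ≤ N * a f := by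
  have : ∀ᶠ N : ℕ in Filter.atTop, ∀ f ∈ F, b f ≤ N * a f := by
    rw [Filter.eventually_all_finset]
    intro f hf
    filter_upwards [tendsto_natCast_atTop_atTop.eventually_ge_atTop (b f / a f)] with N hN
    rwa [div_le_iff₀ (h f hf)] at hN
  exact this.exists

/-- Two rational points of a region at which the small forms have equal linear parts are both in `X` or
both outside `X`. Moving both far in the direction `c`, which makes all the large forms grow, they
reach a common point along rays covered by `ray`. -/
lemma inv_rat {X : Set (ι → ℝ)} {G : Set (AffForm ℚ ι)} {M : ℕ} (hM : 0 < M)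
    (hX : ∀ x y, SameL (F : Set (AffForm ℤ ι)) G M x y → x ∈ X → y ∈ X) (hev : EvConst X)
    (hσ : ∀ f, σ f = 0 ∨ σ f = 1 ∨ σ f = -1) (hR : ∀ f ∈ F, height f ≤ R) (x y c : ι → ℚ)
    (hx : (fun i => (x i : ℝ)) ∈ Region F σ r R) (hy : (fun i => (y i : ℝ)) ∈ Region F σ r R)
    (hxy : ∀ f ∈ F, σ f = 0 → rlin f (fun i => (x i : ℝ)) = rlin f (fun i => (y i : ℝ)))
    (hc : ∀ f ∈ F, (σ f = 0 → rlin f (fun i => (c i : ℝ)) = 0) ∧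
      (σ f ≠ 0 → 0 < σ f * rlin f (fun i => (c i : ℝ))))
    (hxX : (fun i => (x i : ℝ)) ∈ X) : (fun i => (y i : ℝ)) ∈ X := by
  obtain ⟨N, hN⟩ := exists_nat_mul_ge (F.filter fun f => σ f ≠ 0)
    (fun f => σ f * rlin f (fun i => (c i : ℝ)))
    (fun f => σ f * rlin f (fun i => (y i : ℝ)) - σ f * rlin f (fun i => (x i : ℝ)))
    (fun f hf => (hc f (Finset.mem_filter.1 hf).1).2 (Finset.mem_filter.1 hf).2)
  set x' : ι → ℝ := fun i => (x i : ℝ) with hx'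
  set y' : ι → ℝ := fun i => (y i : ℝ) with hy'
  set c' : ι → ℝ := fun i => (c i : ℝ) with hc'
  have e1 : (fun i => (((N : ℚ) * c i : ℚ) : ℝ)) = (N : ℝ) • c' := by
    funext i; simp [c']
  have e2 : (fun i => ((x i - y i + (N : ℚ) * c i : ℚ) : ℝ)) = x' - y' + (N : ℝ) • c' := by
    funext i; simp [c', x', y']
  have h1 := ray hM hX hev hσ hR x (fun i => (N : ℚ) * c i) hx (fun f hf => by
    rw [e1, rlin_smul]
    refine ⟨fun h => by rw [(hc f hf).1 h, mul_zero], ?_⟩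
    by_cases h : σ f = 0
    · simp [h]
    · have := (hc f hf).2 h
      have h3 : (σ f : ℝ) * (N * rlin f c') = N * (σ f * rlin f c') := by ring
      rw [h3]; positivity)
  have h2 := ray hM hX hev hσ hR y (fun i => x i - y i + (N : ℚ) * c i) hy (fun f hf => by
    rw [e2, rlin_add, rlin_sub, rlin_smul]
    refine ⟨fun h => by rw [(hc f hf).1 h, hxy f hf h]; ring, ?_⟩
    by_cases h : σ f = 0
    · simp [h]
    · have := hN f (Finset.mem_filter.2 ⟨hf, h⟩)
      linarith)
  rw [e1] at h1
  rw [e2] at h2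
  have e3 : y' + (x' - y' + (N : ℝ) • c') = x' + (N : ℝ) • c' := by abel
  rw [← hy', e3] at h2
  exact h2.2 (h1.1 hxX)

/-- The pairs `(x, y)` at which the small forms have equal linear parts. -/
lemma eqOn_qdet (F : Finset (AffForm ℤ ι)) (σ : AffForm ℤ ι → ℤ) :
    QDet {z : ι ⊕ ι → ℝ | ∀ f ∈ (F : Set (AffForm ℤ ι)), z ∈
      {z : ι ⊕ ι → ℝ | σ f = 0 →
        rlin f (fun i => z (Sum.inl i)) = rlin f fun i => z (Sum.inr i)}} := by
    refine QDet.forall F.finite_toSet fun f _ => ?_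
    by_cases h : σ f = 0
    · convert QDet.eq (ι := ι ⊕ ι) (Sum.elim (fun i => (f.1 i : ℚ)) (fun i => -(f.1 i : ℚ)), 0)
        using 3 with z
      simp only [h, qev, rlin, Fintype.sum_sum_type, Sum.elim_inl, Sum.elim_inr]
      push_cast
      simp only [neg_mul, Finset.sum_neg_distrib, add_zero, ← sub_eq_add_neg, sub_eq_zero,
        true_imp_iff]
    · simpa [h] using QDet.univ

/-- The invariance of `inv_rat` for real points: a counterexample would yield a rational one, because
within two fixed unit cells the counterexamples form a sign-determined set. -/
lemma inv_real {X : Set (ι → ℝ)} {G : Set (AffForm ℚ ι)} {M : ℕ} (hM : 0 < M) (hG : G.Finite)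
    (hX : ∀ x y, SameL (F : Set (AffForm ℤ ι)) G M x y → x ∈ X → y ∈ X) (hev : EvConst X)
    (hσ : ∀ f, σ f = 0 ∨ σ f = 1 ∨ σ f = -1) (hR : ∀ f ∈ F, height f ≤ R) (x y c : ι → ℝ)
    (hx : x ∈ Region F σ r R) (hy : y ∈ Region F σ r R)
    (hxy : ∀ f ∈ F, σ f = 0 → rlin f x = rlin f y)
    (hc : ∀ f ∈ F, (σ f = 0 → rlin f c = 0) ∧ (σ f ≠ 0 → 0 < σ f * rlin f c))
    (hxX : x ∈ X) : y ∈ X := by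
  have hLX : LDet X := ⟨F, G, M, F.finite_toSet, hG, hM, hX⟩
  obtain ⟨c', hc'⟩ := rat_approx (↑(F.image fun f => ((fun i => 1 * f.1 i, 0) : AffForm ℚ ι)))
    (Finset.finite_toSet _) c
  by_contra hyX
  -- the pairs behaving like `(x, y)` form a polyhedral set, so one of them is rational
  obtain ⟨q, hq⟩ := QDet.exists_rat
    ((((hLX.cell fun i => ⌊x i⌋).inl (κ := ι)).inter
      ((hLX.compl.cell fun i => ⌊y i⌋).inr (ι := ι))).inter
      (((Region.qdet F σ r R).inl (κ := ι)).inter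
      (((Region.qdet F σ r R).inr (ι := ι)).inter (eqOn_qdet F σ))))
    ⟨Sum.elim x y, ⟨⟨fun i => rfl, hxX⟩, fun i => rfl, hyX⟩, hx, hy, hxy⟩
  obtain ⟨⟨⟨-, h1⟩, -, h2⟩, h3, h4, h5⟩ := hq
  refine h2 (inv_rat hM hX hev hσ hR (fun i => q (Sum.inl i)) (fun i => q (Sum.inr i)) c' h3 h4 h5
    (fun f hf => ?_) h1)
  have := hc' _ (Finset.mem_coe.2 (Finset.mem_image_of_mem _ hf))
  rw [rlin_qev, rlin_qev] at this
  simp only [Rat.cast_one, one_mul, Rat.cast_zero, add_zero] at this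
  refine ⟨fun h => (sign_iffs this).2.1.1 ((hc f hf).1 h), fun h => ?_⟩
  have h6 := (hc f hf).2 h
  rw [← sign_eq_one_iff, sign_mul, this] at h6
  rw [← sign_eq_one_iff, sign_mul, h6]

/-- A point at which the forms of `S` have linear parts bounded by `r` can be replaced by one of norm
`O(r)` at which these linear parts are the same. This holds because a linear map has a bounded
right inverse on its range. -/
lemma exists_small_preimage (S : Finset (AffForm ℤ ι)) :
    ∃ C : ℕ, ∀ (x : ι → ℝ) (r : ℝ), 0 ≤ r → (∀ f ∈ S, |rlin f x| ≤ r) →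
      ∃ e : ι → ℝ, (∀ f ∈ S, rlin f e = rlin f x) ∧ ∀ i, |e i| ≤ C * r := by
  let Φ : (ι → ℝ) →ₗ[ℝ] (S → ℝ) :=
    { toFun := fun x f => rlin f.1 x
      map_add' := fun x y => by funext f; exact rlin_add _ _ _
      map_smul' := fun t y => by funext f; exact rlin_smul _ _ _ }
  obtain ⟨g, hg⟩ := Φ.rangeRestrict.exists_rightInverse_of_surjective Φ.range_rangeRestrict
  obtain ⟨L, hL⟩ := g.exists_extend
  have hΦ : ∀ x, Φ (L (Φ x)) = Φ x := fun x => by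
    have h1 : L (Φ x) = g (Φ.rangeRestrict x) := by
      rw [← hL]; rfl
    have h2 : Φ.rangeRestrict (g (Φ.rangeRestrict x)) = Φ.rangeRestrict x :=
      LinearMap.congr_fun hg _
    rw [h1]
    exact congrArg Subtype.val h2
  let L' : (S → ℝ) →L[ℝ] (ι → ℝ) := LinearMap.toContinuousLinearMap L
  obtain ⟨C, hC⟩ := exists_nat_ge ‖L'‖
  refine ⟨C, fun x r hr hx => ⟨L (Φ x), fun f hf => congrFun (hΦ x) ⟨f, hf⟩, fun i => ?_⟩⟩
  have h1 : ‖Φ x‖ ≤ r := (pi_norm_le_iff_of_nonneg hr).2 fun f => hx f.1 f.2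
  calc |L (Φ x) i| ≤ ‖L' (Φ x)‖ := norm_le_pi_norm (L' (Φ x)) i
    _ ≤ ‖L'‖ * ‖Φ x‖ := L'.le_opNorm _
    _ ≤ C * r := mul_le_mul hC h1 (norm_nonneg _) (Nat.cast_nonneg _)

/-- The part of `X` in a region is definable. By `hmove`, each point of the region can be moved, without
changing the linear parts of the small forms, to a point of the region in a fixed box `Box B`. There
`X` is sign-determined, so by `inv_real` the set `X ∩ Region` is the projection of a
sign-determined set. The hypothesis `hgap` says that the large scale `R` exceeds the effect of the
corrections `e`, of size `C * r`, on the large forms. -/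
lemma region_definable {n : ℕ} {F : Finset (AffForm ℤ (Fin n))} {σ : AffForm ℤ (Fin n) → ℤ}
    {X : Set (Fin n → ℝ)} {G : Set (AffForm ℚ (Fin n))} {M : ℕ} (hM : 0 < M)
    (hG : G.Finite)
    (hX : ∀ x y, SameL (F : Set (AffForm ℤ (Fin n))) G M x y → x ∈ X → y ∈ X) (hev : EvConst X)
    (hσ : ∀ f, σ f = 0 ∨ σ f = 1 ∨ σ f = -1) {W C : ℕ} (hW : ∀ f ∈ F, height f ≤ W) (hR : W ≤ R)
    (hC : ∀ x : Fin n → ℝ, (∀ f ∈ F, σ f = 0 → |rlin f x| ≤ r) →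
      ∃ e : Fin n → ℝ, (∀ f ∈ F, σ f = 0 → rlin f e = rlin f x) ∧ ∀ i, |e i| ≤ C * r)
    (hgap : W * C * r ≤ R) :
    (∅ : Set ℝ).Definable SsLang (X ∩ Region F σ r R) := by
  rcases (Region F σ r R).eq_empty_or_nonempty with he | ⟨x₀, hx₀⟩
  · rw [he, inter_empty]; exact Set.definable_empty
  have hσ1 : ∀ f (v b : ℝ), |v| ≤ b → |(σ f : ℝ) * v| ≤ b := fun f v b hv => by
    have := (abs_nonneg v).trans hv
    rcases hσ f with h | h | h <;> rw [h] <;> simpa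
  have hbd : ∀ f ∈ F, ∀ e : Fin n → ℝ, (∀ i, |e i| ≤ C * r) →
      |(σ f : ℝ) * rlin f e| ≤ W * C * r := by
    intro f hf e he
    refine hσ1 f _ _ ((rlin_le f e (C * r) (by positivity) he).trans ?_)
    rw [mul_assoc]
    exact mul_le_mul_of_nonneg_right (by exact_mod_cast hW f hf) (by positivity)
  have hgap' : (W * C * r : ℝ) ≤ R := by exact_mod_cast hgap
  -- an interior direction of the recession cone
  obtain ⟨c, hc⟩ : ∃ c : Fin n → ℝ, ∀ f ∈ F, (σ f = 0 → rlin f c = 0) ∧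
      (σ f ≠ 0 → 0 < σ f * rlin f c) := by
    obtain ⟨e, he, heb⟩ := hC x₀ fun f hf h => (hx₀ f hf).1 h
    refine ⟨x₀ - e, fun f hf => ⟨fun h => ?_, fun h => ?_⟩⟩
    · rw [rlin_sub, he f hf h, sub_self]
    · rw [rlin_sub, mul_sub]
      linarith [(hx₀ f hf).2 h, (abs_le.1 (hbd f hf e heb)).2]
  -- `N • c` pushes every point with coordinates at most `C * r` past the threshold `R`
  obtain ⟨N, hN⟩ := exists_nat_mul_ge (F.filter fun f => σ f ≠ 0)
    (fun f => σ f * rlin f c) (fun _ => R + W * C * r + 1)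
    (fun f hf => (hc f (Finset.mem_filter.1 hf).1).2 (Finset.mem_filter.1 hf).2)
  obtain ⟨B, hB⟩ := exists_nat_mul_ge (Finset.univ : Finset (Fin n)) (fun _ => 1)
    (fun i => C * r + N * |c i| + 1) (fun _ _ => one_pos)
  have hmove : ∀ x ∈ Region F σ r R, ∃ y ∈ Region F σ r R, y ∈ Box (Fin n) B ∧
      ∀ f ∈ F, σ f = 0 → rlin f x = rlin f y := by
    intro x hx
    obtain ⟨e, he, heb⟩ := hC x fun f hf h => (hx f hf).1 h
    have hlin : ∀ f ∈ F, σ f = 0 → rlin f x = rlin f (e + (N : ℝ) • c) := fun f hf h => by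
      rw [rlin_add, rlin_smul, (hc f hf).1 h, he f hf h]; ring
    refine ⟨e + (N : ℝ) • c, fun f hf => ⟨fun h => ?_, fun h => ?_⟩, fun i => ?_, hlin⟩
    · rw [← hlin f hf h]; exact (hx f hf).1 h
    · rw [rlin_add, rlin_smul]
      have h1 := hN f (Finset.mem_filter.2 ⟨hf, h⟩)
      have h2 := (abs_le.1 (hbd f hf e heb)).1
      have h3 : (σ f : ℝ) * (rlin f e + N * rlin f c) =
        σ f * rlin f e + N * (σ f * rlin f c) := by ring
      rw [h3]; linarith
    · have h1 := abs_le.1 (heb i)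
      have h2 := hB i (Finset.mem_univ i)
      have h3 : |(N : ℝ) * c i| ≤ N * |c i| := by rw [abs_mul, abs_of_nonneg (Nat.cast_nonneg N)]
      have h4 := abs_le.1 h3
      simp only [Pi.add_apply, Pi.smul_apply, smul_eq_mul]
      constructor <;> linarith
  have hLX : LDet X := ⟨F, G, M, F.finite_toSet, hG, hM, hX⟩
  have hdef := (((Region.qdet F σ r R).inl (κ := Fin n)).inter
    ((((Region.qdet F σ r R).inter (hLX.box B)).inr (ι := Fin n)).inter (eqOn_qdet F σ))).definable
  convert hdef.image_comp_sumInl_fin n using 1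
  ext x
  constructor
  · rintro ⟨hxX, hx⟩
    obtain ⟨y, hy, hyB, hxy⟩ := hmove x hx
    exact ⟨Sum.elim x y, ⟨hx, ⟨hy, inv_real hM hG hX hev hσ (fun f hf => (hW f hf).trans hR)
      x y c hx hy hxy hc hxX, hyB⟩, hxy⟩, rfl⟩
  · rintro ⟨z, ⟨hx, ⟨hy, hyX, -⟩, hxy⟩, rfl⟩
    exact ⟨inv_real hM hG hX hev hσ (fun f hf => (hW f hf).trans hR) _ _ c hy hx
      (fun f hf h => (hxy f hf h).symm) hc hyX, hx⟩

/-! ### Covering the space by regions -/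

/-- By pigeonhole, one of the `F.card + 1` intervals `(ρ j, ρ (j + 1)]` contains no value `v f`. -/
lemma exists_gap {κ : Type} (F : Finset κ) (v : κ → ℝ) (ρ : ℕ → ℕ) (hρ : Monotone ρ) :
    ∃ j ≤ F.card, ∀ f ∈ F, v f ≤ ρ j ∨ ρ (j + 1) < v f := by
  by_contra! hcon
  have h1 : ∀ j ∈ Finset.range (F.card + 1), ∃ f ∈ F, (ρ j : ℝ) < v f ∧ v f ≤ ρ (j + 1) :=
    fun j hj => hcon j (Nat.lt_succ_iff.1 (Finset.mem_range.1 hj))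
  have : Nonempty κ := ⟨(h1 0 (by simp)).choose⟩
  choose! φ hφ h2 h3 using h1
  obtain ⟨a, ha, b, hb, hab, heq⟩ := Finset.exists_ne_map_eq_of_card_lt_of_maps_to
    (by simp) hφ
  wlog hlt : a < b generalizing a b
  · exact this b hb a ha hab.symm heq.symm (lt_of_le_of_ne (not_lt.1 hlt) hab.symm)
  have h4 : (ρ (a + 1) : ℝ) ≤ ρ b := by exact_mod_cast hρ hlt
  have h5 := h3 a ha
  have h6 := h2 b hb
  rw [heq] at h5
  linarith

/-- An `LDet` set that is eventually constant along rational lines is definable in `⟨ℝ,+,<,1⟩`: at each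
point the absolute values of the linear parts leave a gap in the geometric scale `ρ`, so finitely
many regions cover the space. -/
lemma ss_of_evConst {n : ℕ} {X : Set (Fin n → ℝ)} (hX : LDet X) (hev : EvConst X) :
    SsDefinable X := by
  classical
  obtain ⟨F₀, G, M, hF₀, hG, hM, h⟩ := hX
  obtain ⟨F, rfl⟩ := hF₀.exists_finset_coe
  choose C₀ hC₀ using exists_small_preimage (ι := Fin n)
  set C : ℕ := ∑ S ∈ F.powerset, C₀ S
  set W : ℕ := ∑ f ∈ F, height f
  have hW : ∀ f ∈ F, height f ≤ W := fun f hf =>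
    Finset.single_le_sum (f := height) (fun _ _ => Nat.zero_le _) hf
  let ρ : ℕ → ℕ := fun j => (W + 1) * (W * C + 1) ^ j
  have hρ : Monotone ρ := fun a b hab =>
    Nat.mul_le_mul_left _ (Nat.pow_le_pow_right (Nat.succ_pos _) hab)
  have hρ1 : ∀ j, W ≤ ρ j := fun j => by
    have : 1 ≤ (W * C + 1) ^ j := Nat.one_le_pow _ _ (Nat.succ_pos _)
    show W ≤ (W + 1) * _
    nlinarith
  have hρ2 : ∀ j, W * C * ρ j ≤ ρ (j + 1) := fun j => by
    have : ρ (j + 1) = W * C * ρ j + ρ j := by simp only [ρ, pow_succ]; ring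
    omega
  let τ : (F → SignType) → AffForm ℤ (Fin n) → ℤ :=
    fun s f => if hf : f ∈ F then (s ⟨f, hf⟩ : ℤ) else 0
  have hτ : ∀ s f, τ s f = 0 ∨ τ s f = 1 ∨ τ s f = -1 := by
    intro s f
    by_cases hf : f ∈ F
    · simp only [τ, hf, dif_pos]
      rcases s ⟨f, hf⟩ with _ | _ | _ <;> simp
    · simp [τ, hf]
  have hcover : X = ⋃ p : (F → SignType) × Fin (F.card + 1),
      X ∩ Region F (τ p.1) (ρ p.2) (ρ (p.2 + 1)) := by
    rw [← inter_iUnion, eq_comm, inter_eq_left]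
    intro x _
    obtain ⟨j, hj, hgap⟩ := exists_gap F (fun f => |rlin f x|) ρ hρ
    rw [mem_iUnion]
    refine ⟨(fun f => if |rlin f.1 x| ≤ ρ j then 0 else SignType.sign (rlin f.1 x),
      ⟨j, Nat.lt_succ_of_le hj⟩), fun f hf => ?_⟩
    simp only [τ, hf, dif_pos]
    split_ifs with hle
    · exact ⟨fun _ => hle, by simp⟩
    · have hlt := (hgap f hf).resolve_left hle
      have hne : rlin f x ≠ 0 := by
        intro h0; rw [h0, abs_zero] at hle; exact hle (Nat.cast_nonneg _)
      rcases lt_or_gt_of_ne hne with h0 | h0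
      · rw [abs_of_neg h0] at hlt
        simp only [sign_neg h0]
        exact ⟨by simp, fun _ => by simpa using hlt⟩
      · rw [abs_of_pos h0] at hlt
        simp only [sign_pos h0]
        exact ⟨by simp, fun _ => by simpa using hlt⟩
  rw [SsDefinable, hcover]
  refine Set.definable_iUnion_of_finite fun p => ?_
  refine region_definable hM hG h hev (hτ p.1) hW (hρ1 _) (C := C) (fun x hx => ?_) (hρ2 _)
  obtain ⟨e, he, heb⟩ := hC₀ (F.filter fun f => τ p.1 f = 0) x (ρ p.2) (Nat.cast_nonneg _)
    (fun f hf => hx f (Finset.mem_filter.1 hf).1 (Finset.mem_filter.1 hf).2)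
  refine ⟨e, fun f hf h0 => he f (Finset.mem_filter.2 ⟨hf, h0⟩), fun i => (heb i).trans ?_⟩
  refine mul_le_mul_of_nonneg_right ?_ (Nat.cast_nonneg _)
  exact_mod_cast Finset.single_le_sum (f := C₀) (fun _ _ => Nat.zero_le _)
    (Finset.mem_powerset.2 (Finset.filter_subset _ _))

lemma eventually_sign (a b : ℝ) :
    ∃ ε, ∀ᶠ t : ℝ in Filter.atTop, SignType.sign (a + t * b) = ε := by
  rcases lt_trichotomy b 0 with hb | rfl | hb
  · refine ⟨-1, ?_⟩
    filter_upwards [Filter.eventually_gt_atTop (-a / b)] with t ht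
    rw [div_lt_iff_of_neg hb] at ht
    exact sign_neg (by linarith)
  · exact ⟨SignType.sign a, by simp⟩
  · refine ⟨1, ?_⟩
    filter_upwards [Filter.eventually_gt_atTop (-a / b)] with t ht
    rw [div_lt_iff₀ hb] at ht
    exact sign_pos (by linarith)

/-! ### The condition on lines -/

/-- The rational line through `p` with direction `v` (a point if `v = 0`). -/
def ratLine {n : ℕ} (p v : Fin n → ℚ) : Set (Fin n → ℝ) :=
  {x | ∃ t : ℝ, x = (fun i => (p i : ℝ)) + t • (fun i => (v i : ℝ))}

lemma evConst_of_lines {n : ℕ} {X : Set (Fin n → ℝ)}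
    (h : ∀ p v : Fin n → ℚ, v ≠ 0 → SsDefinable (X ∩ ratLine p v)) : EvConst X := by
  intro p v
  by_cases hv : v = 0
  · subst hv
    exact ⟨0, fun t _ t' _ => by
      have : (fun i : Fin n => (((0 : Fin n → ℚ) i : ℚ) : ℝ)) = 0 := by funext i; simp
      rw [this, smul_zero, smul_zero]⟩
  obtain ⟨G, hG, hd⟩ := (h p v hv).qdet
  have h1 : ∀ g : AffForm ℚ (Fin n), ∃ ε, ∀ᶠ t : ℝ in Filter.atTop,
      SignType.sign (qev g ((fun i => (p i : ℝ)) + t • (fun i => (v i : ℝ)))) = ε := by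
    intro g
    obtain ⟨ε, hε⟩ := eventually_sign (qev g fun i => (p i : ℝ)) (∑ i, (g.1 i : ℝ) * v i)
    refine ⟨ε, ?_⟩
    filter_upwards [hε] with t ht
    rw [← ht]
    congr 1
    simp only [qev, Pi.add_apply, Pi.smul_apply, smul_eq_mul, mul_add, Finset.sum_add_distrib,
      Finset.mul_sum]
    have : ∀ i, (g.1 i : ℝ) * (t * v i) = t * (g.1 i * v i) := fun i => by ring
    simp only [this]; ring
  choose ε hε using h1
  obtain ⟨t₀, ht₀⟩ := Filter.eventually_atTop.1
    ((Filter.eventually_all_finite hG).2 fun g _ => hε g)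
  refine ⟨t₀, fun t ht t' ht' => ⟨fun hx => ?_, fun hx => ?_⟩⟩
  · exact (hd _ _ (fun g hg => (ht₀ t ht g hg).trans (ht₀ t' ht' g hg).symm) ⟨hx, t, rfl⟩).1
  · exact (hd _ _ (fun g hg => (ht₀ t' ht' g hg).trans (ht₀ t ht g hg).symm) ⟨hx, t', rfl⟩).1

lemma ratLine_qdet {n : ℕ} (p v : Fin n → ℚ) (hv : v ≠ 0) : QDet (ratLine p v) := by
  classical
  obtain ⟨j, hj⟩ := Function.ne_iff.1 hv
  have hj' : (v j : ℝ) ≠ 0 := by exact_mod_cast hj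
  convert QDet.forall (finite_univ (α := Fin n)) (fun i _ => QDet.eq
    ((v j • (Pi.single i 1, -p i) - v i • (Pi.single j 1, -p j) : AffForm ℚ (Fin n)))) using 1
  ext x
  simp only [ratLine, mem_ofPred_eq, qev_sub, qev_smul, qev_single, mem_univ, true_imp_iff]
  push_cast
  constructor
  · rintro ⟨t, rfl⟩ i
    simp only [Pi.add_apply, Pi.smul_apply, smul_eq_mul]; ring
  · intro hx
    refine ⟨(x j - p j) / v j, funext fun i => ?_⟩
    simp only [Pi.add_apply, Pi.smul_apply, smul_eq_mul]
    have := hx i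
    field_simp
    linear_combination this
end Main

end Development

/-- A `⟨ℝ,+,<,ℤ⟩`-definable set is `⟨ℝ,+,<,1⟩`-definable iff its intersection with every
rational line is `⟨ℝ,+,<,1⟩`-definable. -/
theorem stmt19 (n : ℕ) (hn : 1 ≤ n) (X : Set (Fin n → ℝ)) (hX : LsDefinable X) :
    SsDefinable X ↔
      ∀ (p v : Fin n → ℚ), v ≠ 0 →
        SsDefinable
          (X ∩ {x : Fin n → ℝ | ∃ t : ℝ,
            x = (fun i => (p i : ℝ)) + t • (fun i => (v i : ℝ))}) := by
  refine ⟨fun h p v hv => Set.Definable.inter h (ratLine_qdet p v hv).definable, fun h => ?_⟩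
  exact ss_of_evConst hX.ldet (evConst_of_lines h)
end
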